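/- arXiv:1601.01650 — 3 statements merged into one kernel-verified Lean document; each statement's English description precedes it below -/
import Mathlib

section
/- For all real α, β > −1, every j ∈ ℕ, every sequence (M_n) of nonnegative reals, and every n ≥ 1, the polynomial Q_n is orthogonal to every polynomial of degree at most n−1 with respect to the varying Sobolev inner product: (Q_n, p)_{S,n} = 0 for every real polynomial p with deg p ≤ n−1. -/
open Polynomial Filter

/-- The Jacobi polynomial `P_n^{(α,β)}` as a real polynomial. -/
noncomputable def jacobiP (α β : ℝ) (n : ℕ) : Polynomial ℝ :=
  ∑ k ∈ Finset.range (n + 1),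
    Polynomial.C (Real.Gamma (n + α + 1) / (Real.Gamma ((n : ℝ) - k + 1) * Real.Gamma (α + k + 1)) *
        (Real.Gamma (n + β + 1) / (Real.Gamma ((k : ℝ) + 1) * Real.Gamma ((n : ℝ) - k + β + 1)))) *
      (Polynomial.C (2⁻¹ : ℝ) * (Polynomial.X - 1)) ^ k *
      (Polynomial.C (2⁻¹ : ℝ) * (Polynomial.X + 1)) ^ (n - k)

/-- The squared Jacobi norm `‖P_n^{(α,β)}‖²`. -/
noncomputable def jacobiNormSq (α β : ℝ) (n : ℕ) : ℝ :=
  ∫ x in (-1 : ℝ)..1, (jacobiP α β n).eval x ^ 2 * (1 - x) ^ α * (1 + x) ^ β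

/-- The kernel `K_n^{(j,k)}(x,y)`. -/
noncomputable def kernK (α β : ℝ) (j k n : ℕ) (x y : ℝ) : ℝ :=
  ∑ i ∈ Finset.range (n + 1),
    (Polynomial.derivative^[j] (jacobiP α β i)).eval x *
      (Polynomial.derivative^[k] (jacobiP α β i)).eval y / jacobiNormSq α β i

/-- The kernel `K_n^{(j,0)}(1,·)` as a polynomial. -/
noncomputable def kernKPoly (α β : ℝ) (j n : ℕ) : Polynomial ℝ :=
  ∑ i ∈ Finset.range (n + 1),
    Polynomial.C ((Polynomial.derivative^[j] (jacobiP α β i)).eval 1 / jacobiNormSq α β i) *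
      jacobiP α β i

/-- The varying Sobolev inner product `(f,g)_{S,n}` with mass `m`. -/
noncomputable def sobInner (α β : ℝ) (j : ℕ) (m : ℝ) (f g : Polynomial ℝ) : ℝ :=
  (∫ x in (-1 : ℝ)..1, f.eval x * g.eval x * (1 - x) ^ α * (1 + x) ^ β) +
    m * (Polynomial.derivative^[j] f).eval 1 * (Polynomial.derivative^[j] g).eval 1

/-- The Jacobi–Sobolev orthogonal polynomial `Q_n`. -/
noncomputable def sobQ (α β : ℝ) (j : ℕ) (Ms : ℕ → ℝ) (n : ℕ) : Polynomial ℝ :=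
  jacobiP α β n -
    Polynomial.C (Ms n * (Polynomial.derivative^[j] (jacobiP α β n)).eval 1 /
        (1 + Ms n * kernK α β j j (n - 1) 1 1)) *
      kernKPoly α β j (n - 1)

open MeasureTheory in
lemma beta_int {a b : ℝ} (ha : -1 < a) (hb : -1 < b) :
    ∫ x in (-1 : ℝ)..1, (1 - x) ^ a * (1 + x) ^ b =
      2 ^ (a + b + 1) * (Real.Gamma (a + 1) * Real.Gamma (b + 1) / Real.Gamma (a + b + 2)) := by
  have h1 : ∫ x in (-1 : ℝ)..1, (1 - x) ^ a * (1 + x) ^ b =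
      ∫ x in (0 : ℝ)..2, x ^ b * (2 - x) ^ a := by
    have := intervalIntegral.integral_comp_add_right (a := -1) (b := 1)
      (fun x : ℝ => x ^ b * (2 - x) ^ a) 1
    norm_num at this
    rw [← this]
    congr 1; ext x
    rw [mul_comm, add_comm x 1]
    congr 2; ring
  rw [h1]
  apply Complex.ofReal_injective
  rw [← intervalIntegral.integral_ofReal]
  have h2 := Complex.betaIntegral_scaled ((b + 1 : ℝ) : ℂ) ((a + 1 : ℝ) : ℂ) (a := 2) two_pos
  rw [Complex.betaIntegral_eq_Gamma_mul_div _ _ (by simp; linarith) (by simp; linarith)] at h2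
  have h3 : ∀ x ∈ Set.uIcc (0 : ℝ) 2, ((x ^ b * (2 - x) ^ a : ℝ) : ℂ) =
      (x : ℂ) ^ (((b + 1 : ℝ) : ℂ) - 1) * (((2 : ℝ) : ℂ) - x) ^ (((a + 1 : ℝ) : ℂ) - 1) := by
    intro x hx
    rw [Set.uIcc_of_le (by norm_num)] at hx
    rw [Complex.ofReal_mul, Complex.ofReal_cpow hx.1, Complex.ofReal_cpow (by linarith [hx.2])]
    push_cast
    simp
  rw [intervalIntegral.integral_congr h3, h2, ← Complex.ofReal_add, Complex.Gamma_ofReal,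
    Complex.Gamma_ofReal, Complex.Gamma_ofReal, Complex.ofReal_mul,
    Complex.ofReal_cpow (by norm_num)]
  push_cast
  rw [show (b : ℂ) + 1 + (a + 1) - 1 = a + b + 1 by ring, show b + 1 + (a + 1) = a + b + 2 by ring,
    mul_comm (Real.Gamma (a + 1) : ℂ)]

lemma beta_integrable {a b : ℝ} (ha : -1 < a) (hb : -1 < b) :
    IntervalIntegrable (fun x : ℝ => (1 - x) ^ a * (1 + x) ^ b) MeasureTheory.volume (-1) 1 := by
  apply intervalIntegral.intervalIntegrable_of_integral_ne_zero
  rw [beta_int ha hb]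
  have h1 := Real.Gamma_pos_of_pos (show 0 < a + 1 by linarith)
  have h2 := Real.Gamma_pos_of_pos (show 0 < b + 1 by linarith)
  have h3 := Real.Gamma_pos_of_pos (show 0 < a + b + 2 by linarith)
  positivity

/-- integrability of polynomial times weight -/
lemma poly_integrable {a b : ℝ} (ha : -1 < a) (hb : -1 < b) (f : Polynomial ℝ) :
    IntervalIntegrable (fun x : ℝ => f.eval x * ((1 - x) ^ a * (1 + x) ^ b))
      MeasureTheory.volume (-1) 1 :=
  (beta_integrable ha hb).continuousOn_mul f.continuous.continuousOn

/-- the weight functional -/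
noncomputable def wL {a b : ℝ} (ha : -1 < a) (hb : -1 < b) : Polynomial ℝ →ₗ[ℝ] ℝ where
  toFun f := ∫ x in (-1 : ℝ)..1, f.eval x * ((1 - x) ^ a * (1 + x) ^ b)
  map_add' f g := by
    rw [← intervalIntegral.integral_add (poly_integrable ha hb f) (poly_integrable ha hb g)]
    congr 1; ext x; simp; ring
  map_smul' c f := by
    simp only [eval_smul, smul_eq_mul, RingHom.id_apply]
    rw [← intervalIntegral.integral_const_mul]
    congr 1; ext x; ring

lemma wL_apply {a b : ℝ} (ha : -1 < a) (hb : -1 < b) (f : Polynomial ℝ) :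
    wL ha hb f = ∫ x in (-1 : ℝ)..1, f.eval x * ((1 - x) ^ a * (1 + x) ^ b) := rfl

lemma wL_monom {a b : ℝ} (ha : -1 < a) (hb : -1 < b) (k l : ℕ) :
    wL ha hb ((1 - X) ^ k * (1 + X) ^ l) = 2 ^ (a + k + (b + l) + 1) *
      (Real.Gamma (a + k + 1) * Real.Gamma (b + l + 1) / Real.Gamma (a + k + (b + l) + 2)) := by
  have hk : (0 : ℝ) ≤ k := k.cast_nonneg
  have hl : (0 : ℝ) ≤ l := l.cast_nonneg
  rw [← beta_int (by linarith) (by linarith), wL_apply]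
  apply intervalIntegral.integral_congr_ae
  have h : ∀ᵐ x : ℝ, x ≠ 1 := by simp [MeasureTheory.ae_iff]
  filter_upwards [h] with x hx1 hx
  rw [Set.uIoc_of_le (by norm_num)] at hx
  have h1 : 1 - x ≠ 0 := fun h => hx1 (by linarith)
  have h2 : 1 + x ≠ 0 := by linarith [hx.1]
  rw [Real.rpow_add_natCast h1, Real.rpow_add_natCast h2]
  simp; ring

lemma wL_sq_pos {a b : ℝ} (ha : -1 < a) (hb : -1 < b) (f : Polynomial ℝ) (hf : f ≠ 0) :
    0 < wL ha hb (f * f) := by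
  rw [wL_apply, intervalIntegral.integral_pos_iff_support_of_nonneg_ae' _ (poly_integrable ha hb _)]
  · refine ⟨by norm_num, ?_⟩
    have hsub : Set.Ioo (-1 : ℝ) 1 \ (f.roots.toFinset : Set ℝ) ⊆
        Function.support (fun x => (f * f).eval x * ((1 - x) ^ a * (1 + x) ^ b)) ∩
          Set.Ioc (-1) 1 := by
      rintro x ⟨⟨h1, h2⟩, h3⟩
      refine ⟨?_, h1, h2.le⟩
      have h4 : f.eval x ≠ 0 := by simpa [hf] using h3
      have h5 : 0 < (1 - x) ^ a := Real.rpow_pos_of_pos (by linarith) _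
      have h6 : 0 < (1 + x) ^ b := Real.rpow_pos_of_pos (by linarith) _
      simp only [Function.mem_support, eval_mul]
      positivity
    refine lt_of_lt_of_le ?_ (MeasureTheory.measure_mono hsub)
    rw [MeasureTheory.measure_sdiff_null ((Finset.finite_toSet _).measure_zero _)]
    simp
  · rw [Set.uIoc_of_le (by norm_num)]
    filter_upwards [MeasureTheory.ae_restrict_mem measurableSet_Ioc] with x hx
    have h5 : 0 ≤ (1 - x) ^ a := Real.rpow_nonneg (by linarith [hx.2]) _
    have h6 : 0 ≤ (1 + x) ^ b := Real.rpow_nonneg (by linarith [hx.1]) _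
    simp only [eval_mul, Pi.zero_apply]
    have := mul_self_nonneg (f.eval x)
    positivity

lemma Gamma_add_nat_real {s : ℝ} (hs : 0 < s) (m : ℕ) :
    Real.Gamma (s + m) = (ascPochhammer ℝ m).eval s * Real.Gamma s := by
  induction m with
  | zero => simp
  | succ m ih =>
    have : s + m ≠ 0 := by positivity
    rw [Nat.cast_succ, ← add_assoc, Real.Gamma_add_one this, ih, ascPochhammer_succ_eval]
    ring

lemma alt_sum (q : Polynomial ℝ) (n : ℕ) (hq : q.natDegree < n) (y : ℝ) :
    ∑ k ∈ Finset.range (n + 1), (-1 : ℝ) ^ k * (n.choose k) * q.eval (y + ((n : ℝ) - k)) = 0 := by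
  have h := congrFun (Polynomial.fwdDiff_iter_eq_zero_of_degree_lt hq) y
  rw [fwdDiff_iter_eq_sum_shift, ← Finset.sum_range_reflect] at h
  simp only [Pi.zero_apply] at h
  rw [← h]
  apply Finset.sum_congr rfl
  intro k hk
  have hk' : k ≤ n := by simpa [Nat.lt_succ_iff] using hk
  have e : n + 1 - 1 - k = n - k := by omega
  rw [e, Nat.sub_sub_self hk', Nat.choose_symm hk']
  simp [Nat.cast_sub hk']

/-- coefficient -/
noncomputable def jc (α β : ℝ) (n k : ℕ) : ℝ :=
  Real.Gamma (n + α + 1) / (Real.Gamma ((n : ℝ) - k + 1) * Real.Gamma (α + k + 1)) *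
        (Real.Gamma (n + β + 1) / (Real.Gamma ((k : ℝ) + 1) * Real.Gamma ((n : ℝ) - k + β + 1)))

lemma jc_pos {α β : ℝ} (hα : -1 < α) (hβ : -1 < β) {n k : ℕ} (hk : k ≤ n) : 0 < jc α β n k := by
  have h0 : (0 : ℝ) ≤ k := k.cast_nonneg
  have h1 : (k : ℝ) ≤ n := by exact_mod_cast hk
  have := Real.Gamma_pos_of_pos (show 0 < (n : ℝ) + α + 1 by linarith)
  have := Real.Gamma_pos_of_pos (show 0 < (n : ℝ) + β + 1 by linarith)
  have := Real.Gamma_pos_of_pos (show 0 < (n : ℝ) - k + 1 by linarith)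
  have := Real.Gamma_pos_of_pos (show 0 < α + k + 1 by linarith)
  have := Real.Gamma_pos_of_pos (show 0 < (k : ℝ) + 1 by linarith)
  have := Real.Gamma_pos_of_pos (show 0 < (n : ℝ) - k + β + 1 by linarith)
  unfold jc
  positivity

lemma jacobiP_eq (α β : ℝ) (n : ℕ) : jacobiP α β n =
    ∑ k ∈ Finset.range (n + 1), C (jc α β n k) *
      (C (2⁻¹ : ℝ) * (X - 1)) ^ k * (C (2⁻¹ : ℝ) * (X + 1)) ^ (n - k) := rfl

lemma jacobiP_eq' (α β : ℝ) (n : ℕ) : jacobiP α β n =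
    ∑ k ∈ Finset.range (n + 1), (jc α β n k * (-1) ^ k * (2⁻¹) ^ n) •
      ((1 - X) ^ k * (1 + X) ^ (n - k)) := by
  rw [jacobiP_eq]
  apply Finset.sum_congr rfl
  intro k hk
  have hk' : k ≤ n := by simpa [Nat.lt_succ_iff] using hk
  rw [smul_eq_C_mul, mul_pow, mul_pow, show (X - 1 : ℝ[X]) = C (-1) * (1 - X) by simp, mul_pow,
    add_comm X 1]
  nth_rewrite 5 [← Nat.add_sub_cancel' hk']
  simp only [C_mul, C_pow, pow_add]
  ring

lemma jacobiP_degree {α β : ℝ} (hα : -1 < α) (hβ : -1 < β) (n : ℕ) :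
    (jacobiP α β n).degree = n := by
  have hle : (jacobiP α β n).degree ≤ n := by
    rw [jacobiP_eq]
    refine (degree_sum_le _ _).trans (Finset.sup_le fun k hk => ?_)
    have hk' : k ≤ n := by simpa [Nat.lt_succ_iff] using hk
    have e : (n : WithBot ℕ) = ((0 + k + (n - k) : ℕ) : WithBot ℕ) := by
      congr 1; omega
    rw [e]
    apply degree_le_of_natDegree_le
    refine natDegree_mul_le_of_le (natDegree_mul_le_of_le (by simp) ?_) ?_
    · compute_degree
    · compute_degree
  refine le_antisymm hle (le_degree_of_ne_zero ?_)
  rw [jacobiP_eq, finsetSum_coeff]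
  refine (Finset.sum_pos (fun k hk => ?_) (by simp)).ne'
  have hk' : k ≤ n := by simpa [Nat.lt_succ_iff] using hk
  have h := jc_pos hα hβ hk'
  have h1 : ((C (2⁻¹ : ℝ) * (X - 1)) ^ k * (C (2⁻¹ : ℝ) * (X + 1)) ^ (n - k)).coeff (k + (n - k))
      = (2⁻¹) ^ k * (2⁻¹) ^ (n - k) := by
    rw [coeff_mul_add_eq_of_natDegree_le (by compute_degree) (by compute_degree)]
    congr 1
    · have := coeff_pow_of_natDegree_le (p := C (2⁻¹ : ℝ) * (X - 1)) (n := 1) (m := k)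
        (by compute_degree)
      rw [mul_one] at this
      rw [this]; simp [coeff_one]
    · have := coeff_pow_of_natDegree_le (p := C (2⁻¹ : ℝ) * (X + 1)) (n := 1) (m := n - k)
        (by compute_degree)
      rw [mul_one] at this
      rw [this]; simp [coeff_one]
  rw [Nat.add_sub_cancel' hk'] at h1
  rw [mul_assoc, coeff_C_mul, h1]
  positivity

lemma jacobi_orth_pow {α β : ℝ} (hα : -1 < α) (hβ : -1 < β) (n m : ℕ) (hm : m < n) :
    wL hα hβ (jacobiP α β n * (1 + X) ^ m) = 0 := by
  rw [jacobiP_eq', Finset.sum_mul, map_sum]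
  set A : ℝ := (2⁻¹) ^ n * 2 ^ (α + β + n + m + 1) / Real.Gamma (α + β + n + m + 2) *
    Real.Gamma (n + α + 1) * Real.Gamma (n + β + 1) / n.factorial with hA
  have := alt_sum (ascPochhammer ℝ m) n (by rwa [ascPochhammer_natDegree]) (β + 1)
  rw [← mul_zero A, ← this, Finset.mul_sum]
  apply Finset.sum_congr rfl
  intro k hk
  have hk' : k ≤ n := by simpa [Nat.lt_succ_iff] using hk
  have h0 : (0 : ℝ) ≤ k := k.cast_nonneg
  have h1 : (k : ℝ) ≤ n := by exact_mod_cast hk'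
  rw [smul_mul_assoc, mul_assoc ((1 - X) ^ k), ← pow_add, map_smul, wL_monom, smul_eq_mul]
  push_cast [Nat.cast_sub hk']
  have hG := Gamma_add_nat_real (show 0 < β + 1 + ((n : ℝ) - k) by linarith) m
  rw [show β + ((n : ℝ) - k + m) + 1 = β + 1 + ((n : ℝ) - k) + m by ring, hG,
    show α + k + (β + ((n : ℝ) - k + m)) + 1 = α + β + n + m + 1 by ring,
    show α + k + (β + ((n : ℝ) - k + m)) + 2 = α + β + n + m + 2 by ring]
  unfold jc
  have e1 : Real.Gamma ((n : ℝ) - k + 1) = (n - k).factorial := by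
    rw [← Nat.cast_sub hk', Real.Gamma_nat_eq_factorial]
  have e2 : (n.factorial : ℝ) = n.choose k * k.factorial * (n - k).factorial := by
    exact_mod_cast (Nat.choose_mul_factorial_mul_factorial hk').symm
  rw [hA, e1, Real.Gamma_nat_eq_factorial, e2,
    show (n : ℝ) - k + β + 1 = β + 1 + ((n : ℝ) - k) by ring]
  have p1 := (Real.Gamma_pos_of_pos (show 0 < α + k + 1 by linarith)).ne'
  have p2 := (Real.Gamma_pos_of_pos (show 0 < β + 1 + ((n : ℝ) - k) by linarith)).ne'
  have p3 : (n.choose k : ℝ) ≠ 0 := by exact_mod_cast (Nat.choose_pos hk').ne'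
  have p4 : (k.factorial : ℝ) ≠ 0 := by exact_mod_cast k.factorial_ne_zero
  have p5 : ((n - k).factorial : ℝ) ≠ 0 := by exact_mod_cast (n - k).factorial_ne_zero
  generalize (2 : ℝ) ^ (α + β + n + m + 1) = T
  generalize Real.Gamma (α + β + n + m + 2) = G
  field_simp

lemma jacobi_orth {α β : ℝ} (hα : -1 < α) (hβ : -1 < β) (n : ℕ) (p : ℝ[X])
    (hp : p.degree < n) : wL hα hβ (jacobiP α β n * p) = 0 := by
  rw [← sum_taylor_eq p (-1), Polynomial.sum_def, Finset.mul_sum, map_sum]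
  apply Finset.sum_eq_zero
  intro i hi
  have hi' : i < n := by
    have h1 := le_degree_of_mem_supp i hi
    rw [degree_taylor] at h1
    exact_mod_cast h1.trans_lt hp
  rw [← smul_eq_C_mul, mul_smul_comm, map_smul,
    show (X - C (-1) : ℝ[X]) = 1 + X by simp [add_comm], jacobi_orth_pow hα hβ n i hi', smul_zero]

lemma normSq_eq {α β : ℝ} (hα : -1 < α) (hβ : -1 < β) (n : ℕ) :
    jacobiNormSq α β n = wL hα hβ (jacobiP α β n * jacobiP α β n) := by
  rw [jacobiNormSq, wL_apply]
  congr 1; ext x; simp only [eval_mul]; ring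

lemma normSq_pos {α β : ℝ} (hα : -1 < α) (hβ : -1 < β) (n : ℕ) : 0 < jacobiNormSq α β n := by
  rw [normSq_eq hα hβ]
  apply wL_sq_pos
  intro h
  have := jacobiP_degree hα hβ n
  simp [h] at this

lemma jacobi_orth2 {α β : ℝ} (hα : -1 < α) (hβ : -1 < β) (i l : ℕ) (h : i ≠ l) :
    wL hα hβ (jacobiP α β i * jacobiP α β l) = 0 := by
  rcases lt_or_gt_of_ne h with h | h
  · rw [mul_comm]
    exact jacobi_orth hα hβ l _ (by rw [jacobiP_degree hα hβ]; exact_mod_cast h)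
  · exact jacobi_orth hα hβ i _ (by rw [jacobiP_degree hα hβ]; exact_mod_cast h)

lemma kern_reproduce {α β : ℝ} (hα : -1 < α) (hβ : -1 < β) (j n : ℕ) (p : ℝ[X])
    (hp : p.degree ≤ n) :
    wL hα hβ (kernKPoly α β j n * p) = (derivative^[j] p).eval 1 := by
  let S : Polynomial.Sequence ℝ := ⟨jacobiP α β, jacobiP_degree hα hβ⟩
  have hS := S.span_degreeLE (m := n) (fun i _ => by simp [S.ne_zero i])
  have hmem : p ∈ Submodule.span ℝ (S '' Set.Iic n) := by
    rw [hS]; exact mem_degreeLE.2 hp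
  clear hp
  induction hmem using Submodule.span_induction with
  | mem q hq =>
    obtain ⟨l, hl, rfl⟩ := hq
    change wL hα hβ (kernKPoly α β j n * jacobiP α β l) = (derivative^[j] (jacobiP α β l)).eval 1
    rw [kernKPoly, Finset.sum_mul, map_sum, Finset.sum_eq_single l]
    · rw [← smul_eq_C_mul, smul_mul_assoc, map_smul, ← normSq_eq hα hβ, smul_eq_mul,
        div_mul_cancel₀ _ (normSq_pos hα hβ l).ne']
    · intro i _ hi
      rw [← smul_eq_C_mul, smul_mul_assoc, map_smul, jacobi_orth2 hα hβ i l hi, smul_zero]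
    · intro h
      exact absurd (Finset.mem_range.2 (Nat.lt_succ_of_le hl)) h
  | zero => simp
  | add x y _ _ hx hy => rw [mul_add, map_add, hx, hy, iterate_map_add, eval_add]
  | smul c x _ hx => rw [mul_smul_comm, map_smul, hx, iterate_derivative_smul, eval_smul]

lemma kern_deriv (α β : ℝ) (j n : ℕ) :
    (derivative^[j] (kernKPoly α β j n)).eval 1 = kernK α β j j n 1 1 := by
  rw [kernKPoly, kernK, iterate_derivative_sum, eval_finsetSum]
  apply Finset.sum_congr rfl
  intro i _
  rw [iterate_derivative_C_mul, eval_mul, eval_C]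
  ring

lemma kernK_nonneg {α β : ℝ} (hα : -1 < α) (hβ : -1 < β) (j n : ℕ) :
    0 ≤ kernK α β j j n 1 1 :=
  Finset.sum_nonneg fun i _ => div_nonneg (mul_self_nonneg _) (normSq_pos hα hβ i).le

/-- `Q_n` is orthogonal to every polynomial of degree ≤ n−1 with respect to
the varying Sobolev inner product. -/
theorem sobQ_orthogonal (α β : ℝ) (hα : -1 < α) (hβ : -1 < β) (j : ℕ) (Ms : ℕ → ℝ)
    (hMs : ∀ n, 0 ≤ Ms n) (n : ℕ) (hn : 1 ≤ n) (p : Polynomial ℝ)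
    (hp : p.degree ≤ (n - 1 : ℕ)) :
    sobInner α β j (Ms n) (sobQ α β j Ms n) p = 0 := by
  have hI : sobInner α β j (Ms n) (sobQ α β j Ms n) p = wL hα hβ (sobQ α β j Ms n * p) +
      Ms n * (derivative^[j] (sobQ α β j Ms n)).eval 1 * (derivative^[j] p).eval 1 := by
    rw [sobInner, wL_apply]
    congr 2; ext x; simp only [eval_mul]; ring
  have hK := kernK_nonneg hα hβ j (n - 1)
  have hD : 1 + Ms n * kernK α β j j (n - 1) 1 1 ≠ 0 := by
    have := mul_nonneg (hMs n) hK
    positivity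
  have hlt : p.degree < n := by
    refine hp.trans_lt ?_
    exact_mod_cast (by omega : n - 1 < n)
  rw [hI, sobQ, sub_mul, map_sub, jacobi_orth hα hβ n p hlt, ← smul_eq_C_mul, smul_mul_assoc,
    map_smul, kern_reproduce hα hβ j (n - 1) p hp, iterate_derivative_sub,
    iterate_derivative_smul, eval_sub, eval_smul, kern_deriv, smul_eq_mul, smul_eq_mul]
  field_simp
  ring
end

section
/- For all real α, β > −1 and all fixed j, k ∈ ℕ, lim_{n→∞} K_{n−1}^{(j,k)}(1,1)/n^{2α+2j+2k+2} = 1/(Γ(α+j+1)·Γ(α+k+1)·2^{α+β+j+k+1}·(α+j+k+1)). -/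
open Polynomial Filter

noncomputable def cc (α β : ℝ) (n k : ℕ) : ℝ :=
  (Real.Gamma (n + α + 1) / (Real.Gamma ((n : ℝ) - k + 1) * Real.Gamma (α + k + 1)) *
        (Real.Gamma (n + β + 1) / (Real.Gamma ((k : ℝ) + 1) * Real.Gamma ((n : ℝ) - k + β + 1))))

lemma aux_coeff (n k j : ℕ) :
    (taylor 1 ((C (2⁻¹ : ℝ) * (X - 1)) ^ k * (C (2⁻¹ : ℝ) * (X + 1)) ^ (n - k))).coeff j
      = if k ≤ j then ((n - k).choose (j - k) : ℝ) * (2⁻¹) ^ j else 0 := by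
  have h : taylor 1 ((C (2⁻¹ : ℝ) * (X - 1)) ^ k * (C (2⁻¹ : ℝ) * (X + 1)) ^ (n - k))
      = (X ^ k * (1 + X) ^ (n - k)).comp (C (2⁻¹ : ℝ) * X) := by
    simp only [taylor_apply, mul_comp, pow_comp, sub_comp, add_comp, C_comp, X_comp, one_comp]
    congr 2
    · simp
    · have : (C (2⁻¹ : ℝ)) * (C 1 + 1) = 1 := by
        rw [← C_1, ← C_add, ← C_mul]; norm_num
      linear_combination this
  rw [h, comp_C_mul_X_coeff, coeff_X_pow_mul']
  split_ifs
  · rw [coeff_one_add_X_pow]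
  · simp

lemma aux_deriv (α β : ℝ) (n j : ℕ) (hn : j ≤ n) :
    (derivative^[j] (jacobiP α β n)).eval 1 = j.factorial * (2⁻¹) ^ j *
      ∑ k ∈ Finset.range (j + 1), cc α β n k * ((n - k).choose (j - k) : ℝ) := by
  have h1 : (derivative^[j] (jacobiP α β n)).eval 1
      = j.factorial * (taylor 1 (jacobiP α β n)).coeff j := by
    rw [taylor_coeff, ← factorial_smul_hasseDeriv]
    simp
  rw [h1, mul_assoc]
  congr 1
  simp only [jacobiP, map_sum, finsetSum_coeff]
  have h2 : ∀ k, (taylor 1 (C (cc α β n k) * (C (2⁻¹ : ℝ) * (X - 1)) ^ k *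
      (C (2⁻¹ : ℝ) * (X + 1)) ^ (n - k))).coeff j = cc α β n k * 
      if k ≤ j then ((n - k).choose (j - k) : ℝ) * (2⁻¹) ^ j else 0 := by
    intro k
    rw [mul_assoc, taylor_mul, taylor_C, coeff_C_mul, aux_coeff]
  refine (Finset.sum_congr rfl fun k _ => h2 k).trans ?_
  rw [Finset.mul_sum]
  symm
  rw [← Finset.sum_subset (Finset.range_mono (Nat.succ_le_succ hn))]
  · refine Finset.sum_congr rfl fun k hk => ?_
    rw [if_pos (by simpa [Nat.lt_succ_iff] using hk)]
    ring
  · intro k _ hk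
    rw [if_neg (by simpa [Nat.lt_succ_iff] using hk), mul_zero]

lemma aux_gamma_poch (x : ℝ) (hx : 0 < x) (m : ℕ) :
    Real.Gamma (x + m) = (ascPochhammer ℝ m).eval x * Real.Gamma x := by
  induction m with
  | zero => simp
  | succ m ih =>
    have h : x + m ≠ 0 := by positivity
    push_cast
    rw [← add_assoc, Real.Gamma_add_one h, ih, ascPochhammer_succ_eval]
    ring

lemma aux_gamma_choose (x : ℝ) (hx : 0 < x) (m : ℕ) :
    Real.Gamma (x + m) / (Real.Gamma ((m : ℝ) + 1) * Real.Gamma x) = Ring.choose (x + m - 1) m := by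
  rw [← Ring.multichoose_eq, Real.Gamma_nat_eq_factorial, aux_gamma_poch x hx]
  have h := Ring.factorial_nsmul_multichoose_eq_ascPochhammer x m
  rw [Polynomial.ascPochhammer_smeval_eq_eval, nsmul_eq_mul] at h
  rw [← h]
  have := (Real.Gamma_pos_of_pos hx).ne'
  have := Nat.factorial_ne_zero m
  field_simp

lemma aux_ratio_pos (a : ℝ) (ha : 0 < a) :
    Tendsto (fun n : ℕ => Real.Gamma (n + a) / (Real.Gamma (n + 1) * (n : ℝ) ^ (a - 1)))
      atTop (nhds 1) := by
  have h1 := Real.GammaSeq_tendsto_Gamma a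
  have hG := (Real.Gamma_pos_of_pos ha).ne'
  have h2 := (tendsto_const_nhds (x := Real.Gamma a)).div h1 hG
  rw [div_self hG] at h2
  have h3 : Tendsto (fun n : ℕ => (n : ℝ) / (n + a)) atTop (nhds 1) :=
    tendsto_natCast_div_add_atTop a
  have h4 := h2.mul h3
  rw [one_mul] at h4
  refine h4.congr' ?_
  filter_upwards [eventually_ge_atTop 1] with n hn
  have hn' : (0 : ℝ) < n := by exact_mod_cast hn
  have hp : ∏ j ∈ Finset.range (n + 1), (a + j) = (ascPochhammer ℝ (n+1)).eval a := by
    generalize n + 1 = m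
    induction m with
    | zero => simp
    | succ m ih => rw [Finset.prod_range_succ, ih, ascPochhammer_succ_eval]
  simp only [Pi.div_apply, Real.GammaSeq]
  rw [hp]
  have h5 := aux_gamma_poch a ha n
  rw [ascPochhammer_succ_eval, Real.Gamma_nat_eq_factorial, add_comm (n : ℝ) a, h5,
    Real.rpow_sub hn', Real.rpow_one]
  have := Nat.factorial_ne_zero n
  have := (ascPochhammer_pos n a ha).ne'
  have : a + n ≠ 0 := by positivity
  have := (Real.rpow_pos_of_pos hn' a).ne'
  field_simp

lemma aux_ratio_one (a : ℝ) :
    Tendsto (fun n : ℕ => Real.Gamma (n + a) / (Real.Gamma (n + 1) * (n : ℝ) ^ (a - 1)))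
      atTop (nhds 1) := by
  obtain ⟨N, hN⟩ := exists_nat_gt (-a)
  induction N generalizing a with
  | zero => exact aux_ratio_pos a (by simpa using hN)
  | succ N ih =>
    have h1 := ih (a + 1) (by push_cast at hN; linarith)
    have h3 : Tendsto (fun n : ℕ => (n : ℝ) / (n + a)) atTop (nhds 1) :=
      tendsto_natCast_div_add_atTop a
    have h4 := h1.mul h3
    rw [one_mul] at h4
    refine h4.congr' ?_
    obtain ⟨M, hM⟩ := exists_nat_gt (-a)
    filter_upwards [eventually_ge_atTop (max 1 M)] with n hn
    have hn' : (0 : ℝ) < n := by exact_mod_cast (le_trans (le_max_left _ _) hn)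
    have hM' : (M : ℝ) ≤ n := by exact_mod_cast (le_trans (le_max_right _ _) hn)
    have hna : (n : ℝ) + a ≠ 0 := by linarith
    rw [← add_assoc, Real.Gamma_add_one hna, add_sub_cancel_right, Real.rpow_sub hn', Real.rpow_one]
    have := (Real.rpow_pos_of_pos hn' a).ne'
    have := (Real.Gamma_pos_of_pos (by positivity : (0 : ℝ) < n + 1)).ne'
    field_simp

lemma aux_ratio (a b : ℝ) :
    Tendsto (fun n : ℕ => Real.Gamma (n + a) / Real.Gamma (n + b) / (n : ℝ) ^ (a - b))
      atTop (nhds 1) := by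
  have h := (aux_ratio_one a).div (aux_ratio_one b) one_ne_zero
  rw [div_one] at h
  refine h.congr' ?_
  filter_upwards [eventually_ge_atTop 1] with n hn
  have hn' : (0 : ℝ) < n := by exact_mod_cast hn
  have := (Real.Gamma_pos_of_pos (by positivity : (0 : ℝ) < n + 1)).ne'
  have e : (n : ℝ) ^ (a - b) = n ^ (a - 1) / n ^ (b - 1) := by
    rw [← Real.rpow_sub hn']; ring_nf
  simp only [Pi.div_apply]
  rw [e]
  have := (Real.rpow_pos_of_pos hn' (a-1)).ne'
  have := (Real.rpow_pos_of_pos hn' (b-1)).ne'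
  field_simp

lemma aux_sum (f : ℕ → ℝ) (p L : ℝ) (hp : -1 < p)
    (hf : Tendsto (fun n : ℕ => f n / (n : ℝ) ^ p) atTop (nhds L)) :
    Tendsto (fun n : ℕ => (∑ i ∈ Finset.range n, f i) / (n : ℝ) ^ (p + 1)) atTop
      (nhds (L / (p + 1))) := by
  have hp1 : 0 < p + 1 := by linarith
  set g : ℕ → ℝ := fun i => ((i + 1 : ℕ) : ℝ) ^ (p + 1) - (i : ℝ) ^ (p + 1) with hg
  have hgs : ∀ n, ∑ i ∈ Finset.range n, g i = (n : ℝ) ^ (p + 1) := by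
    intro n
    rw [hg, Finset.sum_range_sub (fun i : ℕ => (i : ℝ) ^ (p + 1))]
    simp [Real.zero_rpow hp1.ne']
  have hgpos : ∀ i, 0 < g i := by
    intro i
    simp only [hg, sub_pos]
    exact Real.rpow_lt_rpow (by positivity) (by push_cast; linarith) hp1
  have hlim : Tendsto (fun n : ℕ => g n / (n : ℝ) ^ p) atTop (nhds (p + 1)) := by
    have hd : HasDerivAt (fun x : ℝ => x ^ (p + 1)) (p + 1) 1 := by
      simpa using Real.hasDerivAt_rpow_const (x := 1) (p := p + 1) (Or.inl one_ne_zero)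
    have hd' := hd.tendsto_slope_zero_right
    have hinv : Tendsto (fun n : ℕ => ((n : ℝ))⁻¹) atTop (nhdsWithin 0 (Set.Ioi 0)) :=
      tendsto_inv_atTop_nhdsGT_zero.comp tendsto_natCast_atTop_atTop
    refine (hd'.comp hinv).congr' ?_
    filter_upwards [eventually_ge_atTop 1] with n hn
    have hn' : (0 : ℝ) < n := by exact_mod_cast hn
    have e : (1 : ℝ) + (n : ℝ)⁻¹ = (n + 1) / n := by field_simp
    have hq := (Real.rpow_pos_of_pos hn' p).ne'
    simp only [Function.comp, hg, inv_inv, smul_eq_mul, Real.one_rpow]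
    rw [e, Real.div_rpow (by positivity) hn'.le, Real.rpow_add hn' p 1, Real.rpow_one]
    push_cast
    field_simp
  have hfg : Tendsto (fun n => f n / g n) atTop (nhds (L / (p + 1))) := by
    refine (hf.div hlim hp1.ne').congr' ?_
    filter_upwards [eventually_ge_atTop 1] with n hn
    have hn' : (0 : ℝ) < n := by exact_mod_cast hn
    have hq := (Real.rpow_pos_of_pos hn' p).ne'
    simp only [Pi.div_apply]
    have := (hgpos n).ne'
    field_simp
  have ho : (fun n => f n - L / (p + 1) * g n) =o[atTop] g := by
    rw [Asymptotics.isLittleO_iff_tendsto' (Eventually.of_forall fun n h => absurd h (hgpos n).ne')]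
    have := hfg.sub_const (L / (p + 1))
    rw [sub_self] at this
    refine this.congr fun n => ?_
    have := (hgpos n).ne'
    field_simp
  have hdiv : Tendsto (fun n => ∑ i ∈ Finset.range n, g i) atTop atTop := by
    simp_rw [hgs]
    exact (tendsto_rpow_atTop hp1).comp tendsto_natCast_atTop_atTop
  have h2 := (ho.sum_range (fun i => (hgpos i).le) hdiv).tendsto_div_nhds_zero
  simp_rw [Finset.sum_sub_distrib, ← Finset.mul_sum, hgs] at h2
  have h3 := h2.add_const (L / (p + 1))
  rw [zero_add] at h3
  refine h3.congr' ?_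
  filter_upwards [eventually_ge_atTop 1] with n hn
  have hn' : (0 : ℝ) < n := by exact_mod_cast hn
  have hq := (Real.rpow_pos_of_pos hn' (p + 1)).ne'
  field_simp
  ring

lemma aux_cc (α β : ℝ) (k : ℕ) :
    Tendsto (fun n : ℕ => cc α β n k / (n : ℝ) ^ (α + 2 * k)) atTop
      (nhds (1 / (Real.Gamma (α + k + 1) * k.factorial))) := by
  have h := ((aux_ratio (α + 1) (1 - k)).mul (aux_ratio (β + 1) (β + 1 - k))).mul_const
    (1 / (Real.Gamma (α + k + 1) * k.factorial))
  rw [one_mul, one_mul] at h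
  refine h.congr' ?_
  filter_upwards [eventually_ge_atTop 1] with n hn
  have hn' : (0 : ℝ) < n := by exact_mod_cast hn
  have e : (n : ℝ) ^ (α + 2 * k) = n ^ (α + 1 - (1 - k)) * n ^ (β + 1 - (β + 1 - k)) := by
    rw [← Real.rpow_add hn']; ring_nf
  rw [e, cc, Real.Gamma_nat_eq_factorial]
  have e1 : (n : ℝ) + (α + 1) = n + α + 1 := by ring
  have e2 : (n : ℝ) + (β + 1) = n + β + 1 := by ring
  have e3 : (n : ℝ) + (1 - k) = n - k + 1 := by ring
  have e4 : (n : ℝ) + (β + 1 - k) = n - k + β + 1 := by ring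
  rw [e1, e2, e3, e4]
  simp only [div_eq_mul_inv, mul_inv]
  ring

lemma aux_deriv_lim (α β : ℝ) (j : ℕ) :
    Tendsto (fun n : ℕ => (derivative^[j] (jacobiP α β n)).eval 1 / (n : ℝ) ^ (α + 2 * j)) atTop
      (nhds (1 / (Real.Gamma (α + j + 1) * 2 ^ j))) := by
  have hterm : ∀ k ∈ Finset.range (j + 1), Tendsto
      (fun n : ℕ => cc α β n k * ((n - k).choose (j - k) : ℝ) / (n : ℝ) ^ (α + 2 * j)) atTop
      (nhds (if k = j then 1 / (Real.Gamma (α + j + 1) * j.factorial) else 0)) := by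
    intro k hk
    have hkj : k ≤ j := by simpa [Nat.lt_succ_iff] using hk
    split_ifs with h
    · subst h
      simpa using aux_cc α β k
    · have hlt : 0 < j - k := by omega
      have h0 : Tendsto (fun n : ℕ => ((n - k).choose (j - k) : ℝ) / (n : ℝ) ^ (2 * (j - k))) atTop
          (nhds 0) := by
        have hz : Tendsto (fun n : ℕ => ((n : ℝ) ^ (j - k))⁻¹) atTop (nhds 0) :=
          ((tendsto_pow_atTop hlt.ne').comp tendsto_natCast_atTop_atTop).inv_tendsto_atTop
        refine squeeze_zero' (Eventually.of_forall fun n => by positivity) ?_ hz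
        filter_upwards [eventually_ge_atTop 1] with n hn
        have hn' : (0 : ℝ) < n := by exact_mod_cast hn
        have hb : ((n - k).choose (j - k) : ℝ) ≤ (n : ℝ) ^ (j - k) := by
          have h1 : (n - k).choose (j - k) ≤ (n - k) ^ (j - k) := Nat.choose_le_pow _ _
          have h2 : (n - k) ^ (j - k) ≤ n ^ (j - k) := Nat.pow_le_pow_left (Nat.sub_le _ _) _
          exact_mod_cast h1.trans h2
        rw [div_le_iff₀ (by positivity)]
        refine hb.trans (le_of_eq ?_)
        rw [two_mul, pow_add]
        field_simp
      have h3 := (aux_cc α β k).mul h0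
      rw [mul_zero] at h3
      refine h3.congr' ?_
      filter_upwards [eventually_ge_atTop 1] with n hn
      have hn' : (0 : ℝ) < n := by exact_mod_cast hn
      have e : (n : ℝ) ^ (α + 2 * j) = n ^ (α + 2 * k) * n ^ (2 * (j - k)) := by
        rw [← Real.rpow_natCast, ← Real.rpow_add hn']
        push_cast [Nat.cast_sub hkj]
        ring_nf
      rw [e, div_mul_div_comm]
  have hs := (tendsto_finsetSum _ hterm).const_mul ((j.factorial : ℝ) * (2⁻¹) ^ j)
  rw [Finset.sum_ite_eq' , if_pos (by simp)] at hs
  have e : (j.factorial : ℝ) * (2⁻¹) ^ j * (1 / (Real.Gamma (α + j + 1) * j.factorial))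
      = 1 / (Real.Gamma (α + j + 1) * 2 ^ j) := by
    have : (j.factorial : ℝ) ≠ 0 := by exact_mod_cast Nat.factorial_ne_zero j
    simp only [inv_pow]
    field_simp
  rw [e] at hs
  refine hs.congr' ?_
  filter_upwards [eventually_ge_atTop j] with n hn
  rw [aux_deriv α β n j hn, ← Finset.sum_div]
  ring

lemma aux_beta (a b : ℝ) (ha : 0 < a) (hb : 0 < b) :
    IntervalIntegrable (fun s : ℝ => s ^ (a - 1) * (1 - s) ^ (b - 1)) MeasureTheory.volume 0 1 ∧
    ∫ s in (0 : ℝ)..1, s ^ (a - 1) * (1 - s) ^ (b - 1) =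
      Real.Gamma a * Real.Gamma b / Real.Gamma (a + b) := by
  have hc := Complex.betaIntegral_convergent (u := a) (v := b) (by simpa) (by simpa)
  have hcongr : ∀ x ∈ Set.uIoc (0 : ℝ) 1, ((x : ℂ) ^ ((a : ℂ) - 1) * (1 - (x : ℂ)) ^ ((b : ℂ) - 1))
      = ((x ^ (a - 1) * (1 - x) ^ (b - 1) : ℝ) : ℂ) := by
    intro x hx
    rw [Set.uIoc_of_le zero_le_one] at hx
    push_cast
    rw [Complex.ofReal_cpow hx.1.le, Complex.ofReal_cpow (by linarith [hx.2])]
    push_cast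
    rfl
  constructor
  · have h1 := (intervalIntegrable_congr hcongr).1 hc
    rw [intervalIntegrable_iff] at h1 ⊢
    have h3 := MeasureTheory.Integrable.re h1
    simpa [MeasureTheory.IntegrableOn] using h3
  · have h2 := ProbabilityTheory.beta_eq_betaIntegralReal a b ha hb
    rw [ProbabilityTheory.beta] at h2
    rw [h2, Complex.betaIntegral, intervalIntegral.integral_congr_ae
      (MeasureTheory.ae_of_all _ hcongr), intervalIntegral.integral_ofReal, Complex.ofReal_re]

/-- The Jacobi polynomial in the variable `s = (1+x)/2`. -/
noncomputable def QQ (α β : ℝ) (n : ℕ) : ℝ[X] :=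
  ∑ k ∈ Finset.range (n + 1), C (cc α β n k) * ((X - 1) ^ k * X ^ (n - k))

lemma QQ_eval (α β : ℝ) (n : ℕ) (s : ℝ) :
    (jacobiP α β n).eval (2 * s - 1) = (QQ α β n).eval s := by
  simp only [jacobiP, QQ, eval_finsetSum, eval_mul, eval_C, eval_pow, eval_sub, eval_add, eval_X,
    eval_one, cc]
  refine Finset.sum_congr rfl fun k _ => ?_
  have e1 : (2⁻¹ : ℝ) * (2 * s - 1 - 1) = s - 1 := by ring
  have e2 : (2⁻¹ : ℝ) * (2 * s - 1 + 1) = s := by ring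
  rw [e1, e2, mul_assoc]

lemma QQ_monic_part (n k : ℕ) (hk : k ≤ n) :
    ((X - 1 : ℝ[X]) ^ k * X ^ (n - k)).Monic ∧
      ((X - 1 : ℝ[X]) ^ k * X ^ (n - k)).natDegree = n := by
  have h1 : (X - 1 : ℝ[X]).Monic := by simpa using monic_X_sub_C (1 : ℝ)
  have h2 : (X - 1 : ℝ[X]).natDegree = 1 := by simpa using natDegree_X_sub_C (1 : ℝ)
  refine ⟨(h1.pow k).mul (monic_X_pow _), ?_⟩
  rw [(h1.pow k).natDegree_mul (monic_X_pow _), h1.natDegree_pow, h2, natDegree_X_pow]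
  omega

lemma QQ_degree (α β : ℝ) (n : ℕ) : (QQ α β n).natDegree ≤ n := by
  refine natDegree_sum_le_of_forall_le _ _ fun k hk => ?_
  refine (natDegree_C_mul_le _ _).trans ?_
  rw [(QQ_monic_part n k (by simpa [Nat.lt_succ_iff] using hk)).2]

lemma QQ_coeff (α β : ℝ) (hα : -1 < α) (hβ : -1 < β) (n : ℕ) :
    (QQ α β n).coeff n = Ring.choose ((n + α) + (n + β)) n := by
  rw [QQ, finsetSum_coeff, add_comm ((n : ℝ) + α), Ring.add_choose_eq n (Commute.all _ _),
    Finset.Nat.sum_antidiagonal_eq_sum_range_succ_mk]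
  refine Finset.sum_congr rfl fun k hk => ?_
  have hk' : k ≤ n := by simpa [Nat.lt_succ_iff] using hk
  have hkr : (k : ℝ) ≤ n := by exact_mod_cast hk'
  obtain ⟨h1, h2⟩ := QQ_monic_part n k hk'
  have h3 := h1.coeff_natDegree
  rw [h2] at h3
  have hk0 : (0 : ℝ) ≤ k := by positivity
  have g1 := aux_gamma_choose (α + k + 1) (by linarith) (n - k)
  have g2 := aux_gamma_choose (n - k + β + 1) (by linarith) k
  rw [Nat.cast_sub hk'] at g1
  rw [coeff_C_mul, h3, mul_one, cc, mul_comm]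
  have e1 : α + k + 1 + ((n : ℝ) - k) = n + α + 1 := by ring
  have e2 : (n : ℝ) - k + β + 1 + k = n + β + 1 := by ring
  rw [e1, add_sub_cancel_right] at g1
  rw [e2, add_sub_cancel_right] at g2
  rw [g1, g2]

lemma aux_alt (β : ℝ) (n m : ℕ) (hm : m ≤ n) :
    ∑ k ∈ Finset.range (n + 1), (-1 : ℝ) ^ k * (n.choose k) *
      (ascPochhammer ℝ m).eval ((n : ℝ) - k + β + 1) = if m = n then (n.factorial : ℝ) else 0 := by
  have h := fwdDiff_iter_eq_sum_shift (1 : ℝ) (ascPochhammer ℝ m).eval n (β + 1)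
  have h2 : ∑ k ∈ Finset.range (n + 1), (-1 : ℝ) ^ k * (n.choose k) *
      (ascPochhammer ℝ m).eval ((n : ℝ) - k + β + 1) =
      (fwdDiff (1 : ℝ))^[n] (ascPochhammer ℝ m).eval (β + 1) := by
    rw [h, ← Finset.sum_range_reflect]
    refine Finset.sum_congr rfl fun k hk => ?_
    have hk' : k ≤ n := by simpa [Nat.lt_succ_iff] using hk
    have e : n + 1 - 1 - k = n - k := by omega
    rw [e, Nat.choose_symm hk', Nat.cast_sub hk']
    simp only [zsmul_eq_mul, nsmul_eq_mul, mul_one]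
    push_cast
    congr 2
    ring
  rw [h2]
  split_ifs with hmn
  · subst hmn
    have h3 := Polynomial.fwdDiff_iter_degree_eq_factorial (ascPochhammer ℝ m)
    rw [ascPochhammer_natDegree, (monic_ascPochhammer ℝ m).leadingCoeff, one_smul] at h3
    rw [h3]
    simp
  · rw [Polynomial.fwdDiff_iter_eq_zero_of_degree_lt]
    · simp
    · rw [ascPochhammer_natDegree]; omega

lemma aux_mono (α β : ℝ) (hα : -1 < α) (hβ : -1 < β) (k l : ℕ) :
    IntervalIntegrable (fun s : ℝ => (s - 1) ^ k * s ^ l * ((1 - s) ^ α * s ^ β))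
      MeasureTheory.volume 0 1 ∧
    ∫ s in (0 : ℝ)..1, (s - 1) ^ k * s ^ l * ((1 - s) ^ α * s ^ β) =
      (-1) ^ k * (Real.Gamma (β + l + 1) * Real.Gamma (α + k + 1) /
        Real.Gamma (α + β + k + l + 2)) := by
  have hk0 : (0 : ℝ) ≤ k := by positivity
  have hl0 : (0 : ℝ) ≤ l := by positivity
  obtain ⟨h1, h2⟩ := aux_beta (β + l + 1) (α + k + 1) (by linarith) (by linarith)
  have hne : ∀ᵐ s : ℝ, s ≠ 1 := by
    simp [MeasureTheory.ae_iff]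
  have hcongr : ∀ᵐ s : ℝ, s ∈ Set.uIoc (0 : ℝ) 1 →
      (-1) ^ k * (s ^ (β + l + 1 - 1) * (1 - s) ^ (α + k + 1 - 1)) =
      (s - 1) ^ k * s ^ l * ((1 - s) ^ α * s ^ β) := by
    filter_upwards [hne] with s hs1 hs
    rw [Set.uIoc_of_le zero_le_one] at hs
    have hs2 : 0 < 1 - s := by
      have := lt_of_le_of_ne hs.2 hs1
      linarith
    rw [add_sub_cancel_right, add_sub_cancel_right, Real.rpow_add hs.1, Real.rpow_add hs2,
      Real.rpow_natCast, Real.rpow_natCast]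
    have e : (s - 1) ^ k = (-1) ^ k * (1 - s) ^ k := by
      rw [← mul_pow]; ring
    rw [e]; ring
  constructor
  · refine (h1.const_mul ((-1) ^ k)).congr_ae ?_
    rw [Filter.EventuallyEq, MeasureTheory.ae_restrict_iff' measurableSet_uIoc]
    exact hcongr
  · rw [← intervalIntegral.integral_congr_ae hcongr, intervalIntegral.integral_const_mul, h2]
    congr 3
    ring

lemma aux_I (α β : ℝ) (hα : -1 < α) (hβ : -1 < β) (n m : ℕ) (hm : m ≤ n) :
    IntervalIntegrable (fun s : ℝ => (QQ α β n).eval s * s ^ m * ((1 - s) ^ α * s ^ β))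
      MeasureTheory.volume 0 1 ∧
    ∫ s in (0 : ℝ)..1, (QQ α β n).eval s * s ^ m * ((1 - s) ^ α * s ^ β) =
      if m = n then Real.Gamma (n + α + 1) * Real.Gamma (n + β + 1) /
        Real.Gamma (α + β + n + n + 2) else 0 := by
  have he : (fun s : ℝ => (QQ α β n).eval s * s ^ m * ((1 - s) ^ α * s ^ β)) =
      fun s => ∑ k ∈ Finset.range (n + 1), cc α β n k *
        ((s - 1) ^ k * s ^ (n - k + m) * ((1 - s) ^ α * s ^ β)) := by
    funext s
    simp only [QQ, eval_finsetSum, eval_mul, eval_C, eval_pow, eval_sub, eval_X, eval_one]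
    rw [Finset.sum_mul, Finset.sum_mul]
    refine Finset.sum_congr rfl fun k _ => ?_
    rw [pow_add]; ring
  have hint : ∀ k ∈ Finset.range (n + 1), IntervalIntegrable (fun s : ℝ => cc α β n k *
        ((s - 1) ^ k * s ^ (n - k + m) * ((1 - s) ^ α * s ^ β))) MeasureTheory.volume 0 1 :=
    fun k _ => (aux_mono α β hα hβ k (n - k + m)).1.const_mul _
  rw [he]
  refine ⟨by
    have h0 := IntervalIntegrable.sum _ hint
    have e0 : (∑ i ∈ Finset.range (n + 1), fun s : ℝ => cc α β n i *
        ((s - 1) ^ i * s ^ (n - i + m) * ((1 - s) ^ α * s ^ β))) =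
        fun s => ∑ k ∈ Finset.range (n + 1), cc α β n k *
        ((s - 1) ^ k * s ^ (n - k + m) * ((1 - s) ^ α * s ^ β)) := by
      funext s
      simp
    rwa [e0] at h0, ?_⟩
  rw [intervalIntegral.integral_finsetSum hint]
  have hterm : ∀ k ∈ Finset.range (n + 1), (∫ s in (0 : ℝ)..1, cc α β n k *
        ((s - 1) ^ k * s ^ (n - k + m) * ((1 - s) ^ α * s ^ β))) =
      Real.Gamma (n + α + 1) * Real.Gamma (n + β + 1) /
        (Real.Gamma (α + β + n + m + 2) * n.factorial) *
      ((-1 : ℝ) ^ k * (n.choose k) * (ascPochhammer ℝ m).eval ((n : ℝ) - k + β + 1)) := by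
    intro k hk
    have hk' : k ≤ n := by simpa [Nat.lt_succ_iff] using hk
    have hkr : (k : ℝ) ≤ n := by exact_mod_cast hk'
    have hk0 : (0 : ℝ) ≤ k := by positivity
    rw [intervalIntegral.integral_const_mul, (aux_mono α β hα hβ k (n - k + m)).2, cc,
      Nat.cast_choose ℝ hk', ← Nat.cast_sub hk', Real.Gamma_nat_eq_factorial,
      Real.Gamma_nat_eq_factorial]
    push_cast [Nat.cast_sub hk']
    have e1 : β + ((n : ℝ) - k + m) + 1 = (n - k + β + 1) + m := by ring
    have e2 : α + β + k + ((n : ℝ) - k + m) + 2 = α + β + n + m + 2 := by ring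
    rw [e1, e2, aux_gamma_poch _ (by linarith)]
    have p1 := (Real.Gamma_pos_of_pos (by linarith : 0 < α + k + 1)).ne'
    have p2 := (Real.Gamma_pos_of_pos (by linarith : 0 < (n : ℝ) - k + β + 1)).ne'
    have := Nat.factorial_ne_zero n
    generalize Real.Gamma (α + k + 1) = A at *
    generalize Real.Gamma ((n : ℝ) - k + β + 1) = B at *
    field_simp
  rw [Finset.sum_congr rfl hterm, ← Finset.mul_sum, aux_alt β n m hm]
  split_ifs with h
  · subst h
    have := Nat.factorial_ne_zero m
    field_simp
  · simp

lemma aux_norm (α β : ℝ) (hα : -1 < α) (hβ : -1 < β) (n : ℕ) :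
    jacobiNormSq α β n = (2 : ℝ) ^ (α + β + 1) * (Ring.choose ((n + α) + (n + β)) n *
      (Real.Gamma (n + α + 1) * Real.Gamma (n + β + 1) / Real.Gamma (α + β + n + n + 2))) := by
  have h1 := intervalIntegral.integral_comp_mul_sub (a := 0) (b := 1) (c := 2)
    (fun x : ℝ => (jacobiP α β n).eval x ^ 2 * (1 - x) ^ α * (1 + x) ^ β) two_ne_zero 1
  norm_num at h1
  have h2 : jacobiNormSq α β n = 2 * ∫ s in (0 : ℝ)..1, (jacobiP α β n).eval (2 * s - 1) ^ 2 *
      (1 - (2 * s - 1)) ^ α * (1 + (2 * s - 1)) ^ β := by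
    rw [jacobiNormSq]
    norm_num
    rw [h1]
    ring
  have h3 : ∀ s ∈ Set.uIcc (0 : ℝ) 1, (jacobiP α β n).eval (2 * s - 1) ^ 2 *
      (1 - (2 * s - 1)) ^ α * (1 + (2 * s - 1)) ^ β = (2 : ℝ) ^ (α + β) *
      ∑ m ∈ Finset.range (n + 1), (QQ α β n).coeff m *
        ((QQ α β n).eval s * s ^ m * ((1 - s) ^ α * s ^ β)) := by
    intro s hs
    rw [Set.uIcc_of_le zero_le_one] at hs
    have e1 : 1 - (2 * s - 1) = 2 * (1 - s) := by ring
    have e2 : 1 + (2 * s - 1) = 2 * s := by ring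
    rw [QQ_eval, e1, e2, Real.mul_rpow zero_le_two (by linarith [hs.2]),
      Real.mul_rpow zero_le_two hs.1, Real.rpow_add two_pos]
    have e3 : ∑ m ∈ Finset.range (n + 1), (QQ α β n).coeff m *
        ((QQ α β n).eval s * s ^ m * ((1 - s) ^ α * s ^ β)) =
        (QQ α β n).eval s * (QQ α β n).eval s * ((1 - s) ^ α * s ^ β) := by
      generalize hq : (QQ α β n).eval s = q
      have hq' := hq
      rw [eval_eq_sum_range' (Nat.lt_succ_of_le (QQ_degree α β n)) s] at hq'
      calc _ = q * (∑ m ∈ Finset.range (n + 1), (QQ α β n).coeff m * s ^ m) *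
            ((1 - s) ^ α * s ^ β) := by
            rw [Finset.mul_sum, Finset.sum_mul]
            exact Finset.sum_congr rfl fun m _ => by ring
        _ = _ := by rw [hq']
    rw [e3]
    ring
  rw [h2, intervalIntegral.integral_congr h3, intervalIntegral.integral_const_mul,
    intervalIntegral.integral_finsetSum]
  · have h4 : ∀ m ∈ Finset.range (n + 1), (∫ s in (0 : ℝ)..1, (QQ α β n).coeff m *
        ((QQ α β n).eval s * s ^ m * ((1 - s) ^ α * s ^ β))) =
        if m = n then (QQ α β n).coeff n * (Real.Gamma (n + α + 1) * Real.Gamma (n + β + 1) /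
        Real.Gamma (α + β + n + n + 2)) else 0 := by
      intro m hm
      rw [intervalIntegral.integral_const_mul,
        (aux_I α β hα hβ n m (by simpa [Nat.lt_succ_iff] using hm)).2]
      split_ifs with h
      · rw [h]
      · simp
    rw [Finset.sum_congr rfl h4, Finset.sum_ite_eq', if_pos (by simp), QQ_coeff α β hα hβ,
      Real.rpow_add two_pos (α + β) 1, Real.rpow_one]
    ring
  · intro m hm
    exact (aux_I α β hα hβ n m (by simpa [Nat.lt_succ_iff] using hm)).1.const_mul _

lemma aux_norm_lim (α β : ℝ) (hα : -1 < α) (hβ : -1 < β) :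
    Tendsto (fun n : ℕ => jacobiNormSq α β n * n) atTop (nhds ((2 : ℝ) ^ (α + β))) := by
  have h1 := aux_ratio (α + 1) 1
  have h2 := aux_ratio (β + 1) (α + β + 1)
  have h3 : Tendsto (fun n : ℕ => (n : ℝ) / (n + (α + β + 1) / 2)) atTop (nhds 1) :=
    tendsto_natCast_div_add_atTop _
  have h4 := ((h1.mul h2).mul h3).const_mul ((2 : ℝ) ^ (α + β))
  simp only [mul_one] at h4
  refine h4.congr' ?_
  filter_upwards [eventually_ge_atTop 1] with n hn
  have hn1 : (1 : ℝ) ≤ n := by exact_mod_cast hn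
  have hn' : (0 : ℝ) < n := by linarith
  have g := aux_gamma_choose (n + α + β + 1) (by linarith) n
  have e0 : (n : ℝ) + α + β + 1 + n - 1 = (n + α) + (n + β) := by ring
  rw [e0] at g
  have e1 : α + β + n + n + 2 = ((n : ℝ) + α + β + 1 + n) + 1 := by ring
  have hne : (n : ℝ) + α + β + 1 + n ≠ 0 := by linarith
  rw [aux_norm α β hα hβ, ← g, e1, Real.Gamma_add_one hne]
  have e2 : (n : ℝ) ^ (α + 1 - 1) = n ^ α := by ring_nf
  have e3 : (n : ℝ) ^ (β + 1 - (α + β + 1)) = ((n : ℝ) ^ α)⁻¹ := by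
    rw [← Real.rpow_neg hn'.le]; ring_nf
  have e4 : (n : ℝ) + (α + 1) = n + α + 1 := by ring
  have e5 : (n : ℝ) + (β + 1) = n + β + 1 := by ring
  have e6 : (n : ℝ) + (α + β + 1) = n + α + β + 1 := by ring
  have e7 : (n : ℝ) + (α + β + 1) / 2 = (n + α + β + 1 + n) / 2 := by ring
  rw [e2, e3, e4, e5, e6, e7, Real.rpow_add two_pos (α + β) 1, Real.rpow_one]
  have p1 := (Real.rpow_pos_of_pos hn' α).ne'
  have p2 := (Real.Gamma_pos_of_pos (by linarith : 0 < (n : ℝ) + α + β + 1 + n)).ne'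
  have p3 := (Real.Gamma_pos_of_pos (by linarith : 0 < (n : ℝ) + α + β + 1)).ne'
  have p4 := (Real.Gamma_pos_of_pos (by linarith : 0 < (n : ℝ) + 1)).ne'
  generalize Real.Gamma ((n : ℝ) + α + β + 1 + n) = A at *
  generalize Real.Gamma ((n : ℝ) + α + β + 1) = B at *
  generalize Real.Gamma ((n : ℝ) + 1) = D at *
  generalize (n : ℝ) ^ α = E at *
  generalize (n : ℝ) + α + β + 1 + n = F at *
  field_simp

/-- asymptotics of the kernel `K_{n-1}^{(j,k)}(1,1)`. -/
theorem kernK_asymptotics (α β : ℝ) (hα : -1 < α) (hβ : -1 < β) (j k : ℕ) :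
    Filter.Tendsto
      (fun n : ℕ => kernK α β j k (n - 1) 1 1 / (n : ℝ) ^ (2 * α + 2 * j + 2 * k + 2))
      Filter.atTop
      (nhds (1 / (Real.Gamma (α + j + 1) * Real.Gamma (α + k + 1) *
        (2 : ℝ) ^ (α + β + j + k + 1) * (α + j + k + 1)))) := by
  have h := ((aux_deriv_lim α β j).mul (aux_deriv_lim α β k)).div (aux_norm_lim α β hα hβ)
    (Real.rpow_pos_of_pos two_pos (α + β)).ne'
  have hj0 : (0 : ℝ) ≤ j := by positivity
  have hk0 : (0 : ℝ) ≤ k := by positivity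
  have hs := aux_sum (fun i => (derivative^[j] (jacobiP α β i)).eval 1 *
      (derivative^[k] (jacobiP α β i)).eval 1 / jacobiNormSq α β i)
    (2 * α + 2 * j + 2 * k + 1) _ (by linarith) (h.congr' (by
      filter_upwards [eventually_ge_atTop 1] with n hn
      have hn' : (0 : ℝ) < n := by exact_mod_cast hn
      have e : (n : ℝ) ^ (2 * α + 2 * j + 2 * k + 1) = n ^ (α + 2 * j) * n ^ (α + 2 * k) * n := by
        rw [← Real.rpow_add hn', ← Real.rpow_add_one hn'.ne']
        ring_nf
      simp only [Pi.div_apply]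
      rw [e]
      simp only [div_eq_mul_inv, mul_inv]
      ring))
  have e1 : 2 * α + 2 * j + 2 * k + 1 + 1 = 2 * α + 2 * j + 2 * k + 2 := by ring
  rw [e1] at hs
  have e2 : 1 / (Real.Gamma (α + j + 1) * 2 ^ j) * (1 / (Real.Gamma (α + k + 1) * 2 ^ k)) /
      2 ^ (α + β) / (2 * α + 2 * j + 2 * k + 2) = 1 / (Real.Gamma (α + j + 1) *
        Real.Gamma (α + k + 1) * (2 : ℝ) ^ (α + β + j + k + 1) * (α + j + k + 1)) := by
    have e3 : 2 * α + 2 * j + 2 * k + 2 = 2 * (α + j + k + 1) := by ring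
    rw [e3, Real.rpow_add_one two_ne_zero, Real.rpow_add_natCast two_ne_zero,
      Real.rpow_add_natCast two_ne_zero]
    simp only [div_eq_mul_inv, mul_inv]
    ring
  rw [e2] at hs
  refine hs.congr' ?_
  filter_upwards [eventually_ge_atTop 1] with n hn
  rw [kernK, Nat.sub_add_cancel hn]
end

section
/- Fix real α, β > −1, j ∈ ℕ, γ ∈ ℝ, M > 0, and a sequence M_n ≥ 0 with lim_{n→∞} M_n n^γ = M. If γ = 2(α+2j+1), then for every fixed k ∈ ℕ, lim_{n→∞} Q_n^{(k)}(1)/(P_n^{(α,β)})^{(k)}(1) = θ_{α,β,j,k}, where θ_{α,β,j,k} = [M(k−j) + Γ²(α+j+1)·2^{α+β+2j+1}·(α+2j+1)·(α+j+k+1)] / [(α+j+k+1)·(M + Γ²(α+j+1)·2^{α+β+2j+1}·(α+2j+1))]. -/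
open Polynomial Filter

namespace JS

lemma gamma_add_nat (x : ℝ) (hx : 0 < x) (m : ℕ) :
    Real.Gamma (x + m) = (ascPochhammer ℝ m).eval x * Real.Gamma x := by
  induction m with
  | zero => simp
  | succ m ih =>
    rw [Nat.cast_succ, ← add_assoc, Real.Gamma_add_one (by positivity), ih,
      ascPochhammer_succ_eval]
    ring

lemma prod_eq_asc (x : ℝ) (m : ℕ) :
    ∏ j ∈ Finset.range m, (x + j) = (ascPochhammer ℝ m).eval x := by
  induction m with
  | zero => simp
  | succ m ih => rw [Finset.prod_range_succ, ih, ascPochhammer_succ_eval]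

lemma gamma_asymp_pos (s : ℝ) (hs : 0 < s) :
    Tendsto (fun n : ℕ => Real.Gamma (n + s + 1) / ((n : ℝ) ^ s * n.factorial)) atTop (nhds 1) := by
  have h := Real.GammaSeq_tendsto_Gamma s
  have hG := (Real.Gamma_pos_of_pos hs).ne'
  have h2 := (h.inv₀ hG).const_mul (Real.Gamma s)
  rw [mul_inv_cancel₀ hG] at h2
  refine h2.congr fun n => ?_
  rw [Real.GammaSeq, prod_eq_asc, inv_div]
  have := gamma_add_nat s hs (n + 1)
  rw [show (n : ℝ) + s + 1 = s + ((n + 1 : ℕ) : ℝ) by push_cast; ring, this]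
  ring

lemma gamma_asymp_step (s : ℝ)
    (h : Tendsto (fun n : ℕ => Real.Gamma (n + (s + 1) + 1) / ((n : ℝ) ^ (s + 1) * n.factorial))
      atTop (nhds 1)) :
    Tendsto (fun n : ℕ => Real.Gamma (n + s + 1) / ((n : ℝ) ^ s * n.factorial)) atTop (nhds 1) := by
  have h1 : Tendsto (fun n : ℕ => (n : ℝ) / (n + (s + 1))) atTop (nhds 1) :=
    tendsto_natCast_div_add_atTop (s + 1)
  have h2 := h.mul h1
  rw [one_mul] at h2
  refine h2.congr' ?_
  have hev : ∀ᶠ n : ℕ in atTop, -s < n := tendsto_natCast_atTop_atTop.eventually_gt_atTop (-s)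
  filter_upwards [hev, eventually_gt_atTop 0] with n hn hn0
  have hn0' : (0 : ℝ) < n := by exact_mod_cast hn0
  have hp : 0 < (n : ℝ) + s + 1 := by linarith
  rw [show (n : ℝ) + (s + 1) + 1 = (n + s + 1) + 1 by ring, Real.Gamma_add_one hp.ne',
    Real.rpow_add_one hn0'.ne', ← add_assoc]
  have := (Real.rpow_pos_of_pos hn0' s).ne'
  field_simp

lemma gamma_asymp (s : ℝ) :
    Tendsto (fun n : ℕ => Real.Gamma (n + s + 1) / ((n : ℝ) ^ s * n.factorial)) atTop (nhds 1) := by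
  obtain ⟨m, hm⟩ := exists_nat_gt (-s)
  have key : ∀ m : ℕ, ∀ s : ℝ, 0 < s + m →
      Tendsto (fun n : ℕ => Real.Gamma (n + s + 1) / ((n : ℝ) ^ s * n.factorial))
        atTop (nhds 1) := by
    intro m
    induction m with
    | zero => intro s hs; exact gamma_asymp_pos s (by simpa using hs)
    | succ m ih =>
      intro s hs
      apply gamma_asymp_step
      apply ih
      push_cast at hs
      linarith
  exact key m s (by linarith)

lemma gamma_asymp4 (a b c d : ℝ) :
    Tendsto (fun n : ℕ => Real.Gamma (n + a + 1) * Real.Gamma (n + b + 1) /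
      (Real.Gamma (n + c + 1) * Real.Gamma (n + d + 1)) / (n : ℝ) ^ (a + b - c - d))
      atTop (nhds 1) := by
  have h := ((gamma_asymp a).mul (gamma_asymp b)).div ((gamma_asymp c).mul (gamma_asymp d))
    (by norm_num)
  norm_num at h
  refine h.congr' ?_
  filter_upwards [eventually_gt_atTop 0] with n hn0
  have hn0' : (0 : ℝ) < n := by exact_mod_cast hn0
  simp only [Pi.div_apply, Pi.mul_apply]
  rw [Real.rpow_sub hn0', Real.rpow_sub hn0', Real.rpow_add hn0']
  have := fun s => (Real.rpow_pos_of_pos hn0' s).ne'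
  have hf : (n.factorial : ℝ) ≠ 0 := by positivity
  have h1 := this a
  have h2 := this b
  have h3 := this c
  have h4 := this d
  field_simp

lemma diff_asymp (p : ℝ) :
    Tendsto (fun n : ℕ => (((n + 1 : ℕ) : ℝ) ^ p - (n : ℝ) ^ p) / (n : ℝ) ^ (p - 1))
      atTop (nhds p) := by
  have h : HasDerivAt (fun x : ℝ => x ^ p) (p * 1 ^ (p - 1)) 1 :=
    Real.hasDerivAt_rpow_const (Or.inl one_ne_zero)
  rw [Real.one_rpow, mul_one] at h
  have h2 := h.tendsto_slope_zero_right
  have h3 : Tendsto (fun n : ℕ => ((n : ℝ))⁻¹) atTop (nhdsWithin 0 (Set.Ioi 0)) :=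
    tendsto_inv_atTop_nhdsGT_zero.comp tendsto_natCast_atTop_atTop
  refine (h2.comp h3).congr' ?_
  filter_upwards [eventually_gt_atTop 0] with n hn0
  have hn0' : (0 : ℝ) < n := by exact_mod_cast hn0
  simp only [Function.comp, inv_inv, smul_eq_mul, Real.one_rpow]
  rw [show 1 + (n : ℝ)⁻¹ = ((n + 1 : ℕ) : ℝ) / n by push_cast; field_simp,
    Real.div_rpow (by positivity) hn0'.le, Real.rpow_sub_one hn0'.ne']
  have := (Real.rpow_pos_of_pos hn0' p).ne'
  field_simp

lemma stolz (a : ℕ → ℝ) (c p : ℝ) (hp : 0 < p)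
    (h : Tendsto (fun n : ℕ => a n / (n : ℝ) ^ (p - 1)) atTop (nhds c)) :
    Tendsto (fun n : ℕ => (∑ i ∈ Finset.range n, a i) / (n : ℝ) ^ p) atTop (nhds (c / p)) := by
  set g : ℕ → ℝ := fun n => ((n + 1 : ℕ) : ℝ) ^ p - (n : ℝ) ^ p with hg
  have hsum : ∀ n, ∑ i ∈ Finset.range n, g i = (n : ℝ) ^ p := by
    intro n
    have := Finset.sum_range_sub (fun i : ℕ => (i : ℝ) ^ p) n
    simpa [hg, Real.zero_rpow hp.ne'] using this
  have hgpos : ∀ n, 0 < g n := by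
    intro n
    have : (n : ℝ) ^ p < ((n + 1 : ℕ) : ℝ) ^ p :=
      Real.rpow_lt_rpow (by positivity) (by push_cast; linarith) hp
    simp only [hg]; linarith
  have hratio : Tendsto (fun n => a n / g n) atTop (nhds (c / p)) := by
    refine (h.div (diff_asymp p) hp.ne').congr' ?_
    filter_upwards [eventually_gt_atTop 0] with n hn0
    have hn0' : (0 : ℝ) < n := by exact_mod_cast hn0
    exact div_div_div_cancel_right₀ (Real.rpow_pos_of_pos hn0' (p - 1)).ne' _ _
  have ho : (fun n => a n - c / p * g n) =o[atTop] g := by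
    rw [Asymptotics.isLittleO_iff_tendsto (fun n hn => absurd hn (hgpos n).ne')]
    have := hratio.sub_const (c / p)
    rw [sub_self] at this
    refine this.congr fun n => ?_
    have := (hgpos n).ne'
    field_simp
  have ho2 := ho.sum_range (fun n => (hgpos n).le) (by
    simp only [hsum]
    exact (tendsto_rpow_atTop hp).comp tendsto_natCast_atTop_atTop)
  simp only [Finset.sum_sub_distrib, ← Finset.mul_sum, hsum] at ho2
  have ht := ho2.tendsto_div_nhds_zero.add_const (c / p)
  rw [zero_add] at ht
  refine ht.congr' ?_
  filter_upwards [eventually_gt_atTop 0] with n hn0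
  have hn0' : (0 : ℝ) < n := by exact_mod_cast hn0
  have := (Real.rpow_pos_of_pos hn0' p).ne'
  field_simp
  ring

end JS
namespace JS

/-- Coefficient of the Jacobi polynomial. -/
noncomputable def jc (α β : ℝ) (n k : ℕ) : ℝ :=
  Real.Gamma (n + α + 1) / (Real.Gamma ((n : ℝ) - k + 1) * Real.Gamma (α + k + 1)) *
        (Real.Gamma (n + β + 1) / (Real.Gamma ((k : ℝ) + 1) * Real.Gamma ((n : ℝ) - k + β + 1)))

lemma iter_deriv_eval (f : ℝ[X]) (k : ℕ) (r : ℝ) :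
    (derivative^[k] f).eval r = k.factorial * (taylor r f).coeff k := by
  rw [taylor_coeff, ← Polynomial.factorial_smul_hasseDeriv]
  simp

lemma coeff_term (k s m : ℕ) (hs : s ≤ k) :
    ((C (2⁻¹ : ℝ) * X) ^ s * (C (2⁻¹ : ℝ) * X + 1) ^ m : ℝ[X]).coeff k
      = (2⁻¹ : ℝ) ^ k * m.choose (k - s) := by
  obtain ⟨t, rfl⟩ := Nat.exists_eq_add_of_le hs
  have h1 : ((C (2⁻¹ : ℝ) * X + 1) ^ m : ℝ[X]) = ((X + 1) ^ m : ℝ[X]).comp (C (2⁻¹ : ℝ) * X) := by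
    simp
  rw [mul_pow, ← C_pow, mul_assoc, coeff_C_mul, add_comm s t, coeff_X_pow_mul, h1,
    comp_C_mul_X_coeff, coeff_X_add_one_pow, Nat.add_sub_cancel, pow_add]
  ring

lemma coeff_term_zero (k s : ℕ) (q : ℝ[X]) (hs : k < s) :
    ((C (2⁻¹ : ℝ) * X) ^ s * q : ℝ[X]).coeff k = 0 := by
  rw [mul_pow, ← C_pow, mul_assoc, coeff_C_mul, coeff_X_pow_mul', if_neg (by omega), mul_zero]

lemma jacobi_deriv (α β : ℝ) (n k : ℕ) (hk : k ≤ n) :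
    (derivative^[k] (jacobiP α β n)).eval 1 =
      k.factorial * ((2⁻¹ : ℝ) ^ k *
        ∑ s ∈ Finset.range (k + 1), jc α β n s * ((n - s).choose (k - s) : ℕ)) := by
  rw [iter_deriv_eval]
  congr 1
  have hT : taylor (1 : ℝ) (jacobiP α β n) = ∑ s ∈ Finset.range (n + 1),
      C (jc α β n s) * ((C (2⁻¹ : ℝ) * X) ^ s * (C (2⁻¹ : ℝ) * X + 1) ^ (n - s)) := by
    rw [jacobiP, map_sum]
    refine Finset.sum_congr rfl fun s _ => ?_
    rw [taylor_mul, taylor_mul, taylor_C, taylor_pow, taylor_pow, taylor_mul, taylor_mul, taylor_C,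
      map_sub, map_add, taylor_X, taylor_one, mul_assoc]
    have : (C (2⁻¹ : ℝ) * (X + C 1 + C 1) : ℝ[X]) = C (2⁻¹ : ℝ) * X + 1 := by
      rw [add_assoc, mul_add, ← C_add, ← C_mul]
      norm_num
    rw [this, add_sub_cancel_right]
    rfl
  rw [hT, finset_sum_coeff, Finset.mul_sum]
  simp only [coeff_C_mul]
  symm
  have hsub : Finset.range (k + 1) ⊆ Finset.range (n + 1) :=
    Finset.range_subset_range.2 (by omega)
  rw [← Finset.sum_subset hsub]
  · refine Finset.sum_congr rfl fun s hs => ?_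
    rw [coeff_term k s _ (by simpa [Nat.lt_succ_iff] using hs)]
    ring
  · intro s _ hs
    rw [coeff_term_zero _ _ _ (by simpa using hs), mul_zero]

lemma term_asymp (α β : ℝ) (k s : ℕ) (hs : s ≤ k) :
    Tendsto (fun n : ℕ => jc α β n s * ((n - s).choose (k - s) : ℕ) / (n : ℝ) ^ (α + k + s))
      atTop (nhds (1 / (Real.Gamma (α + s + 1) * s.factorial * (k - s).factorial))) := by
  have h := (gamma_asymp4 α β (-k) (β - s)).mul_const
    (1 / (Real.Gamma (α + s + 1) * s.factorial * (k - s).factorial))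
  rw [one_mul] at h
  refine h.congr' ?_
  filter_upwards [eventually_ge_atTop k] with n hn
  have hsn : s ≤ n := hs.trans hn
  have e1 : ((n - s).choose (k - s) : ℝ) =
      (n - s).factorial / ((k - s).factorial * (n - k).factorial) := by
    rw [Nat.cast_choose ℝ (by omega), show n - s - (k - s) = n - k by omega]
  have e2 : Real.Gamma ((n : ℝ) - s + 1) = (n - s).factorial := by
    rw [← Nat.cast_sub hsn, Real.Gamma_nat_eq_factorial]
  have e3 : Real.Gamma ((n : ℝ) + -k + 1) = (n - k).factorial := by
    rw [← sub_eq_add_neg, ← Nat.cast_sub hn, Real.Gamma_nat_eq_factorial]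
  rw [e1, jc, e2, e3, Real.Gamma_nat_eq_factorial,
    show α + β - -(k : ℝ) - (β - s) = α + k + s by ring,
    show (n : ℝ) - s + β + 1 = n + (β - s) + 1 by ring]
  have : ((n - s).factorial : ℝ) ≠ 0 := by positivity
  field_simp

/-- limit constant for the derivatives at one. -/
noncomputable def dc (α : ℝ) (k : ℕ) : ℝ := (2⁻¹ : ℝ) ^ k / Real.Gamma (α + k + 1)

lemma deriv_asymp (α β : ℝ) (k : ℕ) :
    Tendsto (fun n : ℕ => (derivative^[k] (jacobiP α β n)).eval 1 / (n : ℝ) ^ (α + 2 * k))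
      atTop (nhds (dc α k)) := by
  have hterm : ∀ s ∈ Finset.range (k + 1), Tendsto (fun n : ℕ => jc α β n s *
      ((n - s).choose (k - s) : ℕ) / (n : ℝ) ^ (α + 2 * k)) atTop
      (nhds (if s = k then 1 / (Real.Gamma (α + k + 1) * k.factorial) else 0)) := by
    intro s hs
    have hs : s ≤ k := by simpa [Nat.lt_succ_iff] using hs
    have h := term_asymp α β k s hs
    rcases hs.eq_or_lt with rfl | hlt
    · rw [if_pos rfl]
      simp only [Nat.sub_self, Nat.factorial_zero, Nat.cast_one, mul_one] at h ⊢
      rw [two_mul, ← add_assoc]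
      exact h
    · rw [if_neg hlt.ne]
      have h0 : Tendsto (fun n : ℕ => (n : ℝ) ^ (-((k : ℝ) - s))) atTop (nhds 0) :=
        (tendsto_rpow_neg_atTop (by
          have : (s : ℝ) < k := by exact_mod_cast hlt
          linarith)).comp tendsto_natCast_atTop_atTop
      have h2 := h.mul h0
      rw [mul_zero] at h2
      refine h2.congr' ?_
      filter_upwards [eventually_gt_atTop 0] with n hn0
      have hn0' : (0 : ℝ) < n := by exact_mod_cast hn0
      rw [show α + 2 * (k : ℝ) = (α + k + s) + (k - s) by ring, Real.rpow_add hn0' (α + k + s),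
        Real.rpow_neg hn0'.le]
      field_simp
  have h := ((tendsto_finset_sum _ hterm).const_mul ((2⁻¹ : ℝ) ^ k)).const_mul (k.factorial : ℝ)
  rw [Finset.sum_ite_eq' , if_pos (by simp)] at h
  have hc : (k.factorial : ℝ) * ((2⁻¹ : ℝ) ^ k * (1 / (Real.Gamma (α + k + 1) * k.factorial)))
      = dc α k := by
    have : (k.factorial : ℝ) ≠ 0 := by positivity
    rw [dc]; field_simp
  rw [hc] at h
  refine h.congr' ?_
  filter_upwards [eventually_ge_atTop k] with n hn
  rw [jacobi_deriv α β n k hn, ← Finset.sum_div]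
  ring

end JS
namespace JS

lemma beta_real (a b : ℝ) (ha : -1 < a) (hb : -1 < b) :
    IntervalIntegrable (fun x : ℝ => x ^ a * (1 - x) ^ b) MeasureTheory.volume 0 1 ∧
    ∫ x in (0 : ℝ)..1, x ^ a * (1 - x) ^ b =
      Real.Gamma (a + 1) * Real.Gamma (b + 1) / Real.Gamma (a + b + 2) := by
  have ha' : 0 < a + 1 := by linarith
  have hb' : 0 < b + 1 := by linarith
  have hcong : ∀ x ∈ Set.uIcc (0 : ℝ) 1,
      (x : ℂ) ^ (((a + 1 : ℝ) : ℂ) - 1) * (1 - (x : ℂ)) ^ (((b + 1 : ℝ) : ℂ) - 1)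
        = ((x ^ a * (1 - x) ^ b : ℝ) : ℂ) := by
    intro x hx
    rw [Set.uIcc_of_le zero_le_one] at hx
    push_cast
    rw [Complex.ofReal_cpow hx.1, Complex.ofReal_cpow (by linarith [hx.2])]
    push_cast
    simp
  constructor
  · have h := Complex.betaIntegral_convergent (u := ((a + 1 : ℝ) : ℂ)) (v := ((b + 1 : ℝ) : ℂ))
      (by simpa using ha') (by simpa using hb')
    refine h.norm.congr ?_
    intro x hx
    have hx' := Set.uIoc_subset_uIcc hx
    simp only
    rw [hcong x hx', Complex.norm_real, Real.norm_of_nonneg]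
    rw [Set.uIcc_of_le zero_le_one] at hx'
    have := hx'.1
    have : 0 ≤ 1 - x := by linarith [hx'.2]
    positivity
  · have h := Complex.betaIntegral_eq_Gamma_mul_div ((a + 1 : ℝ) : ℂ) ((b + 1 : ℝ) : ℂ)
      (by simpa using ha') (by simpa using hb')
    rw [Complex.betaIntegral, intervalIntegral.integral_congr hcong,
      intervalIntegral.integral_ofReal, ← Complex.ofReal_add, Complex.Gamma_ofReal,
      Complex.Gamma_ofReal, Complex.Gamma_ofReal] at h
    rw [show a + b + 2 = a + 1 + (b + 1) by ring]
    exact_mod_cast h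

/-- Jacobi polynomial in the variable `(1-x)/2`. -/
noncomputable def jR (α β : ℝ) (n : ℕ) : ℝ[X] :=
  ∑ s ∈ Finset.range (n + 1), C (jc α β n s * (-1) ^ s) * (X ^ s * (1 - X) ^ (n - s))

lemma jacobi_eval (α β : ℝ) (n : ℕ) (u : ℝ) :
    (jacobiP α β n).eval (1 - 2 * u) = (jR α β n).eval u := by
  rw [jacobiP, jR, eval_finsetSum, eval_finsetSum]
  refine Finset.sum_congr rfl fun s _ => ?_
  simp only [eval_mul, eval_pow, eval_C, eval_sub, eval_add, eval_X, eval_one]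
  rw [show (2⁻¹ : ℝ) * (1 - 2 * u - 1) = (-1) * u by ring,
    show (2⁻¹ : ℝ) * (1 - 2 * u + 1) = 1 - u by ring, mul_pow, ← jc]
  ring

lemma jR_natDegree (α β : ℝ) (n : ℕ) : (jR α β n).natDegree ≤ n := by
  refine natDegree_sum_le_of_forall_le _ _ fun s hs => ?_
  have hs : s ≤ n := by simpa [Nat.lt_succ_iff] using hs
  have h1 : (1 - X : ℝ[X]).natDegree ≤ 1 := by
    refine (natDegree_sub_le _ _).trans (by simp)
  refine (natDegree_C_mul_le _ _).trans (natDegree_mul_le.trans ?_)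
  have := natDegree_pow_le_of_le (n - s) h1
  rw [natDegree_X_pow]
  omega

lemma jR_coeff (α β : ℝ) (n : ℕ) :
    (jR α β n).coeff n = (-1) ^ n * ∑ s ∈ Finset.range (n + 1), jc α β n s := by
  rw [jR, finsetSum_coeff, Finset.mul_sum]
  refine Finset.sum_congr rfl fun s hs => ?_
  have hs : s ≤ n := by simpa [Nat.lt_succ_iff] using hs
  obtain ⟨t, rfl⟩ := Nat.exists_eq_add_of_le hs
  have h : ((1 - X : ℝ[X]) ^ t).coeff t = (-1) ^ t := by
    have : (1 - X : ℝ[X]) = C (-1) * X + C 1 := by simp; ring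
    have h2 : (C (-1) * X + C 1 : ℝ[X]).natDegree ≤ 1 := natDegree_linear_le
    have := coeff_pow_of_natDegree_le (m := t) h2
    rw [mul_one] at this
    rw [‹(1 - X : ℝ[X]) = _›, this]
    simp [coeff_X, coeff_one]
  rw [coeff_C_mul, Nat.add_sub_cancel_left, add_comm s t, coeff_X_pow_mul, h, pow_add]
  ring

lemma choose_gamma (x : ℝ) (m : ℕ) (hx : 0 < x + 1 - m) :
    Ring.choose x m = Real.Gamma (x + 1) / (m.factorial * Real.Gamma (x + 1 - m)) := by
  have h := gamma_add_nat (x + 1 - m) hx m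
  rw [sub_add_cancel] at h
  have hd := Ring.descPochhammer_eq_factorial_smul_choose x m
  rw [descPochhammer_smeval_eq_ascPochhammer, ascPochhammer_smeval_eq_eval, nsmul_eq_mul, show x - m + 1 = x + 1 - m by ring] at hd
  have := (Real.Gamma_pos_of_pos hx).ne'
  rw [h, hd]
  field_simp

lemma jc_sum (α β : ℝ) (hα : -1 < α) (hβ : -1 < β) (n : ℕ) (hn : 1 ≤ n) :
    ∑ s ∈ Finset.range (n + 1), jc α β n s =
      Real.Gamma (2 * n + α + β + 1) / (n.factorial * Real.Gamma (n + α + β + 1)) := by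
  have hn' : (1 : ℝ) ≤ n := by exact_mod_cast hn
  have h := Ring.add_choose_eq (r := (n : ℝ) + β) (s := (n : ℝ) + α) n (Commute.all _ _)
  rw [Finset.Nat.sum_antidiagonal_eq_sum_range_succ
    (fun i j => Ring.choose ((n : ℝ) + β) i * Ring.choose ((n : ℝ) + α) j)] at h
  rw [choose_gamma _ _ (by linarith)] at h
  rw [show 2 * (n : ℝ) + α + β + 1 = n + β + (n + α) + 1 by ring,
    show (n : ℝ) + α + β + 1 = n + β + (n + α) + 1 - n by ring, h]
  refine Finset.sum_congr rfl fun s hs => ?_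
  have hs : s ≤ n := by simpa [Nat.lt_succ_iff] using hs
  have hs' : (s : ℝ) ≤ n := by exact_mod_cast hs
  have hs0 : (0 : ℝ) ≤ s := by positivity
  rw [choose_gamma _ _ (by linarith), choose_gamma _ _ (by rw [Nat.cast_sub hs]; linarith), jc,
    Real.Gamma_nat_eq_factorial, ← Nat.cast_sub hs, Real.Gamma_nat_eq_factorial,
    Nat.cast_sub hs, show (n : ℝ) + α + 1 - (n - s) = α + s + 1 by ring,
    show (n : ℝ) + β + 1 - s = n - s + β + 1 by ring]
  ring

lemma alt_sum (n m : ℕ) (hm : m ≤ n) (x : ℝ) :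
    ∑ s ∈ Finset.range (n + 1), (-1 : ℝ) ^ s * n.choose s * (ascPochhammer ℝ m).eval (x + s)
      = if m = n then (-1) ^ n * (n.factorial : ℝ) else 0 := by
  have h := fwdDiff_iter_eq_sum_shift (1 : ℝ) (fun y => (ascPochhammer ℝ m).eval y) n x
  have e : ∑ s ∈ Finset.range (n + 1), (-1 : ℝ) ^ s * n.choose s * (ascPochhammer ℝ m).eval (x + s)
      = (-1) ^ n * ((fwdDiff (1 : ℝ))^[n] (fun y => (ascPochhammer ℝ m).eval y) x) := by
    rw [h, Finset.mul_sum]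
    refine Finset.sum_congr rfl fun s hs => ?_
    have hs : s ≤ n := by simpa [Nat.lt_succ_iff] using hs
    obtain ⟨t, rfl⟩ := Nat.exists_eq_add_of_le hs
    rw [Nat.add_sub_cancel_left, zsmul_eq_mul]
    push_cast
    rw [nsmul_eq_mul, mul_one, pow_add]
    have : ((-1 : ℝ) ^ t) * (-1) ^ t = 1 := by rw [← mul_pow]; simp
    linear_combination (-(-1 : ℝ) ^ s * (s + t).choose s * (ascPochhammer ℝ m).eval (x + s)) * this
  rw [e]
  split_ifs with hmn
  · subst hmn
    have h2 := Polynomial.fwdDiff_iter_degree_eq_factorial (ascPochhammer ℝ m)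
    rw [ascPochhammer_natDegree, (monic_ascPochhammer ℝ m).leadingCoeff] at h2
    have h3 := congrFun h2 x
    rw [h3]
    simp
  · have h2 := Polynomial.fwdDiff_iter_eq_zero_of_degree_lt (P := ascPochhammer ℝ m) (n := n)
      (by rw [ascPochhammer_natDegree]; omega)
    have h3 := congrFun h2 x
    rw [h3]
    simp

lemma inner_term (α β : ℝ) (hα : -1 < α) (hβ : -1 < β) (n m s : ℕ) (hs : s ≤ n) :
    jc α β n s * (-1) ^ s * (Real.Gamma (α + m + s + 1) * Real.Gamma (β + (n - s : ℕ) + 1) /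
      Real.Gamma (α + m + s + (β + (n - s : ℕ)) + 2)) =
    Real.Gamma (n + α + 1) * Real.Gamma (n + β + 1) /
      (n.factorial * Real.Gamma (α + β + n + m + 2)) *
      ((-1 : ℝ) ^ s * n.choose s * (ascPochhammer ℝ m).eval (α + 1 + s)) := by
  have hs' : (s : ℝ) ≤ n := by exact_mod_cast hs
  have hs0 : (0 : ℝ) ≤ s := by positivity
  have p1 : 0 < α + 1 + s := by linarith
  have p2 : 0 < (n : ℝ) - s + β + 1 := by linarith
  have h := gamma_add_nat (α + 1 + s) p1 m
  rw [jc, Real.Gamma_nat_eq_factorial, ← Nat.cast_sub hs, Real.Gamma_nat_eq_factorial,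
    Nat.cast_choose ℝ hs, show α + m + s + 1 = α + 1 + s + m by ring, h,
    show α + s + 1 = α + 1 + (s : ℝ) by ring,
    show β + ((n - s : ℕ) : ℝ) + 1 = (n - s : ℕ) + β + 1 by ring,
    show α + m + s + (β + ((n - s : ℕ) : ℝ)) + 2 = α + β + n + m + 2 by
      rw [Nat.cast_sub hs]; ring]
  have := (Real.Gamma_pos_of_pos p1).ne'
  rw [← Nat.cast_sub hs] at p2
  have := (Real.Gamma_pos_of_pos p2).ne'
  field_simp

/-- the closed form of the norm. -/
lemma normSq_eq (α β : ℝ) (hα : -1 < α) (hβ : -1 < β) (n : ℕ) (hn : 1 ≤ n) :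
    jacobiNormSq α β n = 2 ^ (α + β + 1) / (2 * n + α + β + 1) *
      (Real.Gamma (n + α + 1) * Real.Gamma (n + β + 1) /
        (n.factorial * Real.Gamma (n + α + β + 1))) := by
  have hn' : (1 : ℝ) ≤ n := by exact_mod_cast hn
  have step1 : jacobiNormSq α β n = 2 ^ (α + β + 1) *
      ∫ u in (0 : ℝ)..1, (jR α β n).eval u ^ 2 * u ^ α * (1 - u) ^ β := by
    have h := intervalIntegral.integral_comp_sub_mul
      (fun x => (jacobiP α β n).eval x ^ 2 * (1 - x) ^ α * (1 + x) ^ β) (a := 0) (b := 1)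
      (c := 2) two_ne_zero 1
    norm_num at h
    rw [jacobiNormSq]
    have h' : ∫ x in (-1 : ℝ)..1, (jacobiP α β n).eval x ^ 2 * (1 - x) ^ α * (1 + x) ^ β =
        2 * ∫ x in (0 : ℝ)..1, (jacobiP α β n).eval (1 - 2 * x) ^ 2 * (2 * x) ^ α *
          (1 + (1 - 2 * x)) ^ β := by
      rw [h]; ring
    rw [h', ← intervalIntegral.integral_const_mul, ← intervalIntegral.integral_const_mul]
    refine intervalIntegral.integral_congr fun x hx => ?_
    rw [Set.uIcc_of_le zero_le_one] at hx
    rw [jacobi_eval, show 1 + (1 - 2 * x) = 2 * (1 - x) by ring, Real.mul_rpow two_pos.le hx.1,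
      Real.mul_rpow two_pos.le (by linarith [hx.2]), Real.rpow_add two_pos, Real.rpow_add two_pos,
      Real.rpow_one]
    ring
  have step2 : ∫ u in (0 : ℝ)..1, (jR α β n).eval u ^ 2 * u ^ α * (1 - u) ^ β =
      ∫ u in (0 : ℝ)..1, ∑ m ∈ Finset.range (n + 1), ∑ s ∈ Finset.range (n + 1),
        ((jR α β n).coeff m * (jc α β n s * (-1) ^ s)) *
          (u ^ (α + m + s) * (1 - u) ^ (β + (n - s : ℕ))) := by
    refine intervalIntegral.integral_congr_Ioo_of_le zero_le_one fun u hu => ?_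
    have hu1 : 0 < 1 - u := by linarith [hu.2]
    have e1 : (jR α β n).eval u = ∑ m ∈ Finset.range (n + 1), (jR α β n).coeff m * u ^ m :=
      eval_eq_sum_range' (Nat.lt_succ_of_le (jR_natDegree α β n)) u
    have e2 : (jR α β n).eval u = ∑ s ∈ Finset.range (n + 1),
        (jc α β n s * (-1) ^ s) * (u ^ s * (1 - u) ^ (n - s)) := by
      rw [jR, eval_finsetSum]
      simp
    rw [sq]
    conv_lhs => rw [mul_assoc, mul_assoc]
    nth_rewrite 1 [e1]
    rw [e2, Finset.sum_mul]
    refine Finset.sum_congr rfl fun m _ => ?_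
    rw [Finset.sum_mul, Finset.mul_sum]
    refine Finset.sum_congr rfl fun s _ => ?_
    rw [Real.rpow_add hu.1, Real.rpow_add hu.1, Real.rpow_add hu1, Real.rpow_natCast,
      Real.rpow_natCast, Real.rpow_natCast]
    ring
  have hbeta : ∀ m s : ℕ, _ := fun m s => beta_real (α + m + s) (β + (n - s : ℕ))
    (by linarith [Nat.cast_nonneg (α := ℝ) m, Nat.cast_nonneg (α := ℝ) s])
    (by linarith [Nat.cast_nonneg (α := ℝ) (n - s)])
  have step3 : ∫ u in (0 : ℝ)..1, (jR α β n).eval u ^ 2 * u ^ α * (1 - u) ^ β =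
      ∑ m ∈ Finset.range (n + 1), (jR α β n).coeff m *
        (Real.Gamma (n + α + 1) * Real.Gamma (n + β + 1) /
          (n.factorial * Real.Gamma (α + β + n + m + 2)) *
          (if m = n then (-1) ^ n * (n.factorial : ℝ) else 0)) := by
    rw [step2, intervalIntegral.integral_finsetSum]
    · refine Finset.sum_congr rfl fun m hm => ?_
      rw [intervalIntegral.integral_finsetSum]
      · rw [← alt_sum n m (by simpa [Nat.lt_succ_iff] using hm) (α + 1), Finset.mul_sum,
          Finset.mul_sum]
        refine Finset.sum_congr rfl fun s hs => ?_
        rw [intervalIntegral.integral_const_mul, (hbeta m s).2, mul_assoc,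
          inner_term α β hα hβ n m s (by simpa [Nat.lt_succ_iff] using hs)]
      · exact fun s _ => (hbeta m s).1.const_mul _
    · refine fun m _ => ?_
      have := IntervalIntegrable.sum (Finset.range (n + 1)) (fun s _ => (hbeta m s).1.const_mul
        ((jR α β n).coeff m * (jc α β n s * (-1) ^ s)))
      simpa [Finset.sum_fn] using this
  have hz : ∀ m ∈ Finset.range (n + 1), m ≠ n → (jR α β n).coeff m *
        (Real.Gamma (n + α + 1) * Real.Gamma (n + β + 1) /
          (n.factorial * Real.Gamma (α + β + n + m + 2)) *
          (if m = n then (-1) ^ n * (n.factorial : ℝ) else 0)) = 0 := by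
    intro m _ hmn
    rw [if_neg hmn]; ring
  rw [Finset.sum_eq_single_of_mem n (by simp) hz, if_pos rfl, jR_coeff, jc_sum α β hα hβ n hn]
    at step3
  rw [step1, step3]
  have p1 : 0 < 2 * (n : ℝ) + α + β + 1 := by linarith
  rw [show α + β + n + n + 2 = (2 * (n : ℝ) + α + β + 1) + 1 by ring, Real.Gamma_add_one p1.ne']
  have := (Real.Gamma_pos_of_pos p1).ne'
  have p3 : 0 < (n : ℝ) + α + β + 1 := by linarith
  have := (Real.Gamma_pos_of_pos p3).ne'
  have hs : ((-1 : ℝ) ^ n) * (-1) ^ n = 1 := by rw [← mul_pow]; simp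
  have hs2 : ((-1 : ℝ) ^ n) ^ 2 = 1 := by rw [sq, hs]
  field_simp
  rw [hs2]
  try ring

lemma norm_asymp (α β : ℝ) (hα : -1 < α) (hβ : -1 < β) :
    Tendsto (fun n : ℕ => (n : ℝ) * jacobiNormSq α β n) atTop (nhds (2 ^ (α + β))) := by
  have h1 := gamma_asymp4 α β 0 (α + β)
  have h2 : Tendsto (fun n : ℕ => (n : ℝ) / (n + (α + β + 1) / 2)) atTop (nhds 1) :=
    tendsto_natCast_div_add_atTop _
  have h := (h1.mul h2).const_mul ((2 : ℝ) ^ (α + β))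
  rw [mul_one, mul_one] at h
  refine h.congr' ?_
  filter_upwards [eventually_ge_atTop 1] with n hn
  have hn' : (1 : ℝ) ≤ n := by exact_mod_cast hn
  rw [normSq_eq α β hα hβ n hn, Real.rpow_add_one two_ne_zero,
    show α + β - 0 - (α + β) = 0 by ring, Real.rpow_zero, add_zero, Real.Gamma_nat_eq_factorial,
    ← add_assoc (n : ℝ) α β]
  have p1 : 0 < 2 * (n : ℝ) + α + β + 1 := by linarith
  have p2 : (n : ℝ) + (α + β + 1) / 2 = (2 * (n : ℝ) + α + β + 1) / 2 := by ring
  rw [p2]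
  field_simp

end JS

namespace JS

lemma kern_asymp (α β : ℝ) (hα : -1 < α) (hβ : -1 < β) (j k : ℕ) :
    Tendsto (fun n : ℕ => kernK α β j k (n - 1) 1 1 / (n : ℝ) ^ (2 * (α + j + k + 1)))
      atTop (nhds (dc α j * dc α k / 2 ^ (α + β) / (2 * (α + j + k + 1)))) := by
  have hp : 0 < 2 * (α + j + k + 1) := by
    linarith [Nat.cast_nonneg (α := ℝ) j, Nat.cast_nonneg (α := ℝ) k]
  have h := ((deriv_asymp α β j).mul (deriv_asymp α β k)).div (norm_asymp α β hα hβ)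
    (Real.rpow_pos_of_pos two_pos _).ne'
  have h2 := stolz (fun i => (derivative^[j] (jacobiP α β i)).eval 1 *
      (derivative^[k] (jacobiP α β i)).eval 1 / jacobiNormSq α β i) _ _ hp (h.congr' (by
    filter_upwards [eventually_gt_atTop 0] with n hn0
    have hn0' : (0 : ℝ) < n := by exact_mod_cast hn0
    simp only [Pi.div_apply]
    rw [show 2 * (α + j + k + 1) - 1 = (α + 2 * j) + (α + 2 * k) + 1 by ring,
      Real.rpow_add_one hn0'.ne', Real.rpow_add hn0' (α + 2 * j)]
    have := (Real.rpow_pos_of_pos hn0' (α + 2 * j)).ne'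
    have := (Real.rpow_pos_of_pos hn0' (α + 2 * k)).ne'
    generalize (n : ℝ) ^ (α + 2 * (j : ℝ)) = A at *
    generalize (n : ℝ) ^ (α + 2 * (k : ℝ)) = B at *
    field_simp))
  refine h2.congr' ?_
  filter_upwards [eventually_gt_atTop 0] with n hn0
  rw [kernK, Nat.sub_add_cancel hn0]

lemma sobQ_deriv (α β : ℝ) (j k : ℕ) (Ms : ℕ → ℝ) (n : ℕ) :
    (derivative^[k] (sobQ α β j Ms n)).eval 1 = (derivative^[k] (jacobiP α β n)).eval 1 -
      Ms n * (derivative^[j] (jacobiP α β n)).eval 1 / (1 + Ms n * kernK α β j j (n - 1) 1 1) *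
        kernK α β j k (n - 1) 1 1 := by
  rw [sobQ, iterate_derivative_sub, iterate_derivative_C_mul, eval_sub, eval_mul, eval_C,
    kernKPoly, iterate_derivative_sum, eval_finsetSum, kernK]
  congr 2
  refine Finset.sum_congr rfl fun i _ => ?_
  rw [iterate_derivative_C_mul, eval_mul, eval_C]
  ring

end JS

/-- limit of `Q_n^{(k)}(1)/(P_n^{(α,β)})^{(k)}(1)` when `γ = 2(α+2j+1)`. -/
theorem sobQ_deriv_ratio_critical_gamma (α β : ℝ) (hα : -1 < α) (hβ : -1 < β) (j : ℕ)
    (γ M : ℝ) (hM : 0 < M) (Ms : ℕ → ℝ) (hMs : ∀ n, 0 ≤ Ms n)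
    (hlim : Filter.Tendsto (fun n : ℕ => Ms n * (n : ℝ) ^ γ) Filter.atTop (nhds M))
    (hγ : γ = 2 * (α + 2 * j + 1)) (k : ℕ) :
    Filter.Tendsto
      (fun n : ℕ => (Polynomial.derivative^[k] (sobQ α β j Ms n)).eval 1 /
        (Polynomial.derivative^[k] (jacobiP α β n)).eval 1)
      Filter.atTop
      (nhds ((M * ((k : ℝ) - j) +
          Real.Gamma (α + j + 1) ^ 2 * (2 : ℝ) ^ (α + β + 2 * (j : ℝ) + 1) *
            (α + 2 * j + 1) * (α + j + k + 1)) /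
        ((α + j + k + 1) *
          (M + Real.Gamma (α + j + 1) ^ 2 * (2 : ℝ) ^ (α + β + 2 * (j : ℝ) + 1) *
            (α + 2 * j + 1))))) := by
  have hj0 : (0 : ℝ) ≤ j := by positivity
  have hk0 : (0 : ℝ) ≤ k := by positivity
  have hKjj := JS.kern_asymp α β hα hβ j j
  have hKjk := JS.kern_asymp α β hα hβ j k
  have hPj := JS.deriv_asymp α β j
  have hPk := JS.deriv_asymp α β k
  have hGj : 0 < Real.Gamma (α + j + 1) := Real.Gamma_pos_of_pos (by linarith)
  have hGk : 0 < Real.Gamma (α + k + 1) := Real.Gamma_pos_of_pos (by linarith)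
  have hdj : 0 < JS.dc α j := by rw [JS.dc]; positivity
  have hdk : 0 < JS.dc α k := by rw [JS.dc]; positivity
  have hw : (0 : ℝ) < 2 ^ (α + β) := by positivity
  have p1 : 0 < α + j + k + 1 := by linarith
  have p2 : 0 < α + j + j + 1 := by linarith
  have hden := (hlim.mul hKjj).const_add 1
  have hdpos : 1 + M * (JS.dc α j * JS.dc α j / 2 ^ (α + β) / (2 * (α + j + j + 1))) ≠ 0 := by
    positivity
  have hmain := (hPk.sub (((hlim.mul hPj).div hden hdpos).mul hKjk)).div hPk hdk.ne'
  refine (hmain.congr' ?_).trans (le_of_eq ?_)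
  · filter_upwards [eventually_gt_atTop 0] with n hn0
    have hn0' : (0 : ℝ) < n := by exact_mod_cast hn0
    simp only [Pi.div_apply]
    have e1 : Ms n * (n : ℝ) ^ γ * (kernK α β j j (n - 1) 1 1 / (n : ℝ) ^ (2 * (α + j + j + 1)))
        = Ms n * kernK α β j j (n - 1) 1 1 := by
      rw [show 2 * (α + j + j + 1) = γ by rw [hγ]; ring]
      have := (Real.rpow_pos_of_pos hn0' γ).ne'
      field_simp
    have e2 : (n : ℝ) ^ (2 * (α + j + k + 1)) * (n : ℝ) ^ (α + 2 * j) =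
        (n : ℝ) ^ γ * (n : ℝ) ^ (α + 2 * k) := by
      rw [← Real.rpow_add hn0', ← Real.rpow_add hn0', hγ]
      congr 1
      ring
    rw [e1, JS.sobQ_deriv]
    have x0 := (Real.rpow_pos_of_pos hn0' (α + 2 * k)).ne'
    have x1 := (Real.rpow_pos_of_pos hn0' (2 * (α + j + k + 1))).ne'
    have x2 := (Real.rpow_pos_of_pos hn0' (α + 2 * j)).ne'
    refine Eq.trans ?_ (div_div_div_cancel_right₀ x0 _ _)
    congr 1
    rw [sub_div]
    congr 1
    generalize 1 + Ms n * kernK α β j j (n - 1) 1 1 = D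
    generalize kernK α β j k (n - 1) 1 1 = K
    generalize eval 1 (derivative^[j] (jacobiP α β n)) = A
    have e3 : (n : ℝ) ^ γ / ((n : ℝ) ^ (α + 2 * j) * (n : ℝ) ^ (2 * (α + j + k + 1))) =
        1 / (n : ℝ) ^ (α + 2 * k) := by
      rw [div_eq_div_iff (mul_ne_zero x2 x1) x0]
      linear_combination -e2
    calc _ = Ms n * A / D * K *
        ((n : ℝ) ^ γ / ((n : ℝ) ^ (α + 2 * j) * (n : ℝ) ^ (2 * (α + j + k + 1)))) := by ring
      _ = _ := by rw [e3]; ring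
  · congr 1
    have hpow : (2 : ℝ) ^ (α + β + 2 * (j : ℝ) + 1) = 2 ^ (α + β) * (2 ^ j) ^ 2 * 2 := by
      rw [Real.rpow_add two_pos, Real.rpow_add two_pos, Real.rpow_one, mul_comm (2 : ℝ) (j : ℝ),
        Real.rpow_mul two_pos.le, Real.rpow_natCast]
      norm_num
    have p3 : 0 < α + 2 * j + 1 := by linarith
    rw [hpow, show α + j + j + 1 = α + 2 * j + 1 by ring, JS.dc, JS.dc, inv_pow, inv_pow]
    rw [show α + j + j + 1 = α + 2 * j + 1 by ring, JS.dc, inv_pow] at hdpos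
    generalize Real.Gamma (α + j + 1) = G at *
    generalize Real.Gamma (α + k + 1) = H at *
    generalize (2 : ℝ) ^ (α + β) = W at *
    have t1 : (0 : ℝ) < 2 ^ j := by positivity
    have t2 : (0 : ℝ) < 2 ^ k := by positivity
    generalize (2 : ℝ) ^ j = T at *
    generalize (2 : ℝ) ^ k = S at *
    have q1 : M + G ^ 2 * (W * T ^ 2 * 2) * (α + 2 * j + 1) ≠ 0 := by positivity
    have q2 : 1 + M * (T⁻¹ / G * (T⁻¹ / G) / W / (2 * (α + 2 * j + 1))) =
      (M + G ^ 2 * (W * T ^ 2 * 2) * (α + 2 * j + 1)) /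
        (G ^ 2 * (W * T ^ 2 * 2) * (α + 2 * j + 1)) := by
      field_simp
      ring
    rw [q2]
    field_simp
    ring
end
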